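/- Theorem 1 specialized with ξ_1 = ξ_2 = 1: for nonnegative integers k, ℓ and real parameters μ_1, μ_2, one has (ℓ+1)ζ(k+ℓ+4)∑_{a_1+a_2=k} μ_1^{a_1}μ_2^{a_2} + ∑_{a_1+a_2=k, b_1+b_2=ℓ} (μ_1^{a_1}μ_2^{a_2} + μ_2^{a_1}μ_1^{a_2}) ζ(a_2+b_2+2, a_1+b_1+2) = ∑_{a_1+a_2=k, b_1+b_2=ℓ} (μ_1^{a_1}μ_2^{a_2} + μ_2^{a_1}μ_1^{a_2}) ∑_{|α|=a_1+b_1+1, |β|=a_2+b_2+1} ζ(α_0,...,α_{a_1}+1, β_0,...,β_{a_2}+1) + ∑_{a_1+a_2+a_3=k, b_1+b_2+b_3=ℓ} (μ_1^{a_1}+μ_2^{a_1})(μ_1+μ_2)^{a_2} 2^{b_2} (μ_1^{a_3}+μ_2^{a_3}) ∑_{|α|=a_1+b_1+1, |β|=a_2+b_2+1, |γ|=a_3+b_3+1} ζ(α_0,...,α_{a_1}, β_0,...,β_{a_2}+γ_0, γ_1,...,γ_{a_3}+1). -/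

import Mathlib

open Finset

/-- Multiple zeta value `ζ(α₀,…,α_{n-1}) = ∑_{0<ℓ₀<⋯<ℓ_{n-1}} ∏ ℓᵢ^{-αᵢ}`. -/
noncomputable def mzv {n : ℕ} (α : Fin n → ℕ) : ℝ :=
  ∑' ℓ : {ℓ : Fin n → ℕ // StrictMono ℓ ∧ ∀ i, 0 < ℓ i},
    ∏ i, ((ℓ.1 i : ℝ) ^ (α i))⁻¹

/-- Compositions of `m` into `n` positive parts. -/
def Comp (n m : ℕ) : Type := {v : Fin n → ℕ // (∀ i, 0 < v i) ∧ ∑ i, v i = m}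

/-- Increase the last entry of a tuple by one. -/
def incLast {n : ℕ} (v : Fin n → ℕ) : Fin n → ℕ :=
  fun i => if (i : ℕ) = n - 1 then v i + 1 else v i

/-- `∑ ζ(α₀,…,α_{a₁}+1, β₀,…,β_{a₂}+1)` over compositions `|α| = a₁+b₁+1`,
`|β| = a₂+b₂+1`. -/
noncomputable def S2 (a₁ b₁ a₂ b₂ : ℕ) : ℝ :=
  ∑' (α : Comp (a₁ + 1) (a₁ + b₁ + 1)) (β : Comp (a₂ + 1) (a₂ + b₂ + 1)),
    mzv (Fin.append (incLast α.1) (incLast β.1))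

/-- `∑ ζ(α₀,…,α_{a₁}, β₀,…,β_{a₂}+γ₀, γ₁,…,γ_{a₃}+1)` over compositions
`|α| = a₁+b₁+1`, `|β| = a₂+b₂+1`, `|γ| = a₃+b₃+1`. -/
noncomputable def S3 (a₁ b₁ a₂ b₂ a₃ b₃ : ℕ) : ℝ :=
  ∑' (α : Comp (a₁ + 1) (a₁ + b₁ + 1)) (β : Comp (a₂ + 1) (a₂ + b₂ + 1))
     (γ : Comp (a₃ + 1) (a₃ + b₃ + 1)),
    mzv (incLast (Fin.append α.1 (Fin.append
      (Function.update β.1 (Fin.last a₂) (β.1 (Fin.last a₂) + γ.1 0))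
      (Fin.tail γ.1))))

/-- division by the index: integration against dt/t -/
noncomputable def I0 : Module.End ℝ (ℕ → ℝ) where
  toFun h n := h n / n
  map_add' x y := by ext n; simp [add_div]
  map_smul' c x := by ext n; simp [mul_div_assoc]

/-- integration against dt/(1-t), with denominators to the power k -/
noncomputable def opk (k : ℕ) : Module.End ℝ (ℕ → ℝ) where
  toFun h n := (∑ m ∈ range n, h m) / (n : ℝ) ^ k
  map_add' x y := by ext n; simp [add_div, Finset.sum_add_distrib]
  map_smul' c x := by ext n; simp [mul_div_assoc, ← Finset.mul_sum]

/-- integration against dt/(1-t) -/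
noncomputable def I1 : Module.End ℝ (ℕ → ℝ) := opk 1

lemma I0_apply (h : ℕ → ℝ) (n : ℕ) : I0 h n = h n / n := rfl
lemma opk_apply (k : ℕ) (h : ℕ → ℝ) (n : ℕ) :
    opk k h n = (∑ m ∈ range n, h m) / (n : ℝ) ^ k := rfl
lemma I1_apply (h : ℕ → ℝ) (n : ℕ) : I1 h n = (∑ m ∈ range n, h m) / n := by
  simp [I1, opk_apply]

lemma opk_succ (k : ℕ) : opk (k + 1) = I0 * opk k := by
  ext h n
  simp only [Module.End.mul_apply, I0_apply, opk_apply, pow_succ, div_div]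

lemma opk_succ' (k : ℕ) : opk (k + 1) = I0 ^ k * I1 := by
  induction k with
  | zero => simp [I1]
  | succ k ih => rw [opk_succ, ih, pow_succ', mul_assoc]

lemma opk_add (k c : ℕ) : opk (k + c) = I0 ^ c * opk k := by
  induction c with
  | zero => simp
  | succ c ih => rw [← add_assoc, opk_succ, ih, pow_succ', mul_assoc]

/-- sum over all words with a letters I1 and b letters I0 -/
noncomputable def PP : ℕ → ℕ → Module.End ℝ (ℕ → ℝ)
  | 0, 0 => 1
  | a + 1, 0 => PP a 0 * I1
  | 0, b + 1 => PP 0 b * I0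
  | a + 1, b + 1 => PP a (b + 1) * I1 + PP (a + 1) b * I0

lemma PP_zero_zero : PP 0 0 = 1 := by simp [PP]
lemma PP_succ_zero (a : ℕ) : PP (a+1) 0 = I1 * PP a 0 := by
  induction a with
  | zero => simp [PP]
  | succ a ih => rw [PP, ih, mul_assoc, ← PP.eq_2, ih]
lemma PP_zero_succ (b : ℕ) : PP 0 (b+1) = I0 * PP 0 b := by
  induction b with
  | zero => simp [PP]
  | succ b ih => rw [PP, ih, mul_assoc, ← PP.eq_3, ih]
lemma PP_succ_succ (a b : ℕ) :
    PP (a+1) (b+1) = I1 * PP a (b+1) + I0 * PP (a+1) b := by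
  induction a generalizing b with
  | zero =>
    induction b with
    | zero => simp [PP]; abel
    | succ b ih =>
      have e1 := PP.eq_4 0 (b+1)
      have e2 := PP.eq_4 0 b
      have e3 := PP.eq_3 (b+1)
      have e4 := PP_zero_succ (b+1)
      simp only [Nat.succ_eq_add_one] at e1 e2 e3
      calc _ = PP 0 (b+1+1) * I1 + PP (0+1) (b+1) * I0 := e1
        _ = (I0 * PP 0 (b+1)) * I1 + (I1 * PP 0 (b+1) + I0 * PP (0+1) b) * I0 := by rw [e4, ih]
        _ = I1 * (PP 0 (b+1) * I0) + I0 * (PP 0 (b+1) * I1 + PP (0+1) b * I0) := by noncomm_ring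
        _ = _ := by rw [← e2, ← e3]
  | succ a iha =>
    induction b with
    | zero =>
      have e1 := PP.eq_4 (a+1) 0
      have e2 := PP.eq_4 a 0
      have e3 := PP.eq_2 (a+1)
      have e4 := PP_succ_zero (a+1)
      simp only [Nat.succ_eq_add_one] at e1 e2 e3
      calc _ = PP (a+1) (0+1) * I1 + PP (a+1+1) 0 * I0 := e1
        _ = (I1 * PP a (0+1) + I0 * PP (a+1) 0) * I1 + (I1 * PP (a+1) 0) * I0 := by rw [e4, iha]
        _ = I1 * (PP a (0+1) * I1 + PP (a+1) 0 * I0) + I0 * (PP (a+1) 0 * I1) := by noncomm_ring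
        _ = _ := by rw [← e2, ← e3]
    | succ b ih =>
      have e1 := PP.eq_4 (a+1) (b+1)
      have e2 := PP.eq_4 a (b+1)
      have e3 := PP.eq_4 (a+1) b
      simp only [Nat.succ_eq_add_one] at e1 e2 e3
      calc _ = PP (a+1) (b+1+1) * I1 + PP (a+1+1) (b+1) * I0 := e1
        _ = (I1 * PP a (b+1+1) + I0 * PP (a+1) (b+1)) * I1
            + (I1 * PP (a+1) (b+1) + I0 * PP (a+1+1) b) * I0 := by rw [iha, ih]
        _ = I1 * (PP a (b+1+1) * I1 + PP (a+1) (b+1) * I0)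
            + I0 * (PP (a+1) (b+1) * I1 + PP (a+1+1) b * I0) := by noncomm_ring
        _ = _ := by rw [← e2, ← e3]

/-- operator attached to an index -/
noncomputable def app {n : ℕ} (v : Fin n → ℕ) : Module.End ℝ (ℕ → ℝ) :=
  ((List.ofFn v).map opk).reverse.prod

lemma app_append {m n : ℕ} (u : Fin m → ℕ) (v : Fin n → ℕ) :
    app (Fin.append u v) = app v * app u := by
  simp [app, List.ofFn_fin_append]

lemma app_cons {n : ℕ} (v : Fin (n+1) → ℕ) : app v = app (Fin.tail v) * opk (v 0) := by
  simp [app, List.ofFn_succ, Fin.tail_def]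

lemma app_snoc {n : ℕ} (v : Fin (n+1) → ℕ) :
    app v = opk (v (Fin.last n)) * app (Fin.init v) := by
  rw [app, List.ofFn_succ']
  simp [app, Fin.init_def, Function.comp_def]

lemma app_incLast {n : ℕ} (v : Fin n → ℕ) (hn : 0 < n) : app (incLast v) = I0 * app v := by
  obtain ⟨n, rfl⟩ : ∃ m, n = m + 1 := ⟨n - 1, by omega⟩
  rw [app_snoc, app_snoc v, ← mul_assoc, ← opk_succ]
  have h1 : incLast v (Fin.last n) = v (Fin.last n) + 1 := by simp [incLast]
  have h2 : Fin.init (incLast v) = Fin.init v := by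
    ext i
    have := i.2
    simp [incLast, Fin.init_def]; omega
  rw [h1, h2]

lemma app_update {n : ℕ} (v : Fin (n+1) → ℕ) (c : ℕ) :
    app (Function.update v (Fin.last n) (v (Fin.last n) + c)) = I0 ^ c * app v := by
  rw [app_snoc, app_snoc v, ← mul_assoc, ← opk_add]
  simp

instance (n m : ℕ) : Finite (Comp n m) := by
  let f : Comp n m → (Fin n → Fin (m+1)) := fun v i =>
    ⟨v.1 i, by
      have := Finset.single_le_sum (f := v.1) (fun j _ => Nat.zero_le _) (Finset.mem_univ i)
      have h2 := v.2.2
      omega⟩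
  refine Finite.of_injective f ?_
  intro v w h
  apply Subtype.ext
  funext i
  have := congrFun h i
  simpa [f] using this

noncomputable instance (n m : ℕ) : Fintype (Comp n m) := Fintype.ofFinite _

/-- split according to the first part -/
def compEquiv (n m : ℕ) : Comp n m ⊕ Comp (n+1) m ≃ Comp (n+1) (m+1) where
  toFun s := match s with
    | .inl v => ⟨Fin.cons 1 v.1, by
        constructor
        · intro i; refine Fin.cases ?_ (fun j => ?_) i
          · simp
          · simpa using v.2.1 j
        · rw [Fin.sum_univ_succ]; simp [v.2.2, add_comm]⟩
    | .inr v => ⟨Fin.cons (v.1 0 + 1) (Fin.tail v.1), by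
        constructor
        · intro i; refine Fin.cases ?_ (fun j => ?_) i
          · simp
          · simpa [Fin.tail_def] using v.2.1 j.succ
        · have := v.2.2
          rw [Fin.sum_univ_succ] at this ⊢; simp [Fin.tail_def]; omega⟩
  invFun w := if h : w.1 0 = 1 then .inl ⟨Fin.tail w.1, by
        constructor
        · intro i; exact w.2.1 i.succ
        · have := w.2.2
          rw [Fin.sum_univ_succ] at this; simp [Fin.tail_def]; omega⟩
      else .inr ⟨Fin.cons (w.1 0 - 1) (Fin.tail w.1), by
        have h0 := w.2.1 0
        constructor
        · intro i; refine Fin.cases ?_ (fun j => ?_) i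
          · simp; omega
          · simpa [Fin.tail_def] using w.2.1 j.succ
        · have := w.2.2
          rw [Fin.sum_univ_succ] at this ⊢; simp [Fin.tail_def]; omega⟩
  left_inv s := by
    rcases s with v | v
    · simp; rfl
    · have := v.2.1 0
      have h : ¬ (v.1 0 = 0) := by omega
      simp [h]; rfl
  right_inv w := by
    have h0 := w.2.1 0
    by_cases h : w.1 0 = 1
    · simp only [h, dif_pos]
      apply Subtype.ext
      simp only []
      funext i
      refine Fin.cases ?_ (fun j => ?_) i
      · simp [h]
      · simp [Fin.tail_def]
    · simp only [h, dif_neg, not_false_eq_true]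
      apply Subtype.ext
      have : w.1 0 - 1 + 1 = w.1 0 := by omega
      simp [this]

lemma sum_comp {M : Type*} [AddCommMonoid M] (n m : ℕ) (Φ : (Fin (n+1) → ℕ) → M) :
    ∑ γ : Comp (n+1) (m+1), Φ γ.1 =
      ∑ δ : Comp n m, Φ (Fin.cons 1 δ.1) +
      ∑ δ : Comp (n+1) m, Φ (Fin.cons (δ.1 0 + 1) (Fin.tail δ.1)) := by
  rw [← (compEquiv n m).sum_comp, Fintype.sum_sum_type]
  rfl

lemma comp_empty (n m : ℕ) (h : m < n) : IsEmpty (Comp n m) := by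
  refine ⟨fun v => ?_⟩
  have h1 : ∑ i : Fin n, 1 ≤ ∑ i, v.1 i := Finset.sum_le_sum fun i _ => v.2.1 i
  have h2 := v.2.2
  simp at h1
  omega

lemma comp_empty' (m : ℕ) : IsEmpty (Comp 0 (m+1)) := by
  refine ⟨fun v => ?_⟩
  have h2 := v.2.2
  simp at h2

instance : Unique (Comp 0 0) where
  default := ⟨fun i => i.elim0, by simp⟩
  uniq v := Subtype.ext (by ext i; exact i.elim0)

/-- word sum by compositions -/
noncomputable def QQ (a b : ℕ) : Module.End ℝ (ℕ → ℝ) :=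
  ∑ γ : Comp (a+1) (a+b+1), app (Fin.tail γ.1) * I0 ^ (γ.1 0 - 1)

lemma QQ_I1 (a b : ℕ) : ∑ γ : Comp (a+1) (a+b+1), app γ.1 = QQ a b * I1 := by
  rw [QQ, Finset.sum_mul]
  refine Finset.sum_congr rfl fun γ _ => ?_
  have h0 := γ.2.1 0
  rw [app_cons, mul_assoc, ← opk_succ']
  congr 2; omega

lemma QQ_eq (a b : ℕ) : QQ a b =
    ∑ δ : Comp a (a+b), app δ.1 + ∑ δ : Comp (a+1) (a+b), app (Fin.tail δ.1) * I0 ^ (δ.1 0) := by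
  rw [QQ, sum_comp a (a+b) (fun γ => app (Fin.tail γ) * I0 ^ (γ 0 - 1))]
  simp

lemma QQ_I0 (a b : ℕ) : ∑ γ : Comp (a+1) (a+b+1), app (Fin.tail γ.1) * I0 ^ (γ.1 0) =
    QQ a b * I0 := by
  rw [QQ, Finset.sum_mul]
  refine Finset.sum_congr rfl fun γ _ => ?_
  have h0 := γ.2.1 0
  rw [mul_assoc, ← pow_succ]
  congr 2; omega

lemma QQ_PP (a b : ℕ) : QQ a b = PP a b := by
  induction a generalizing b with
  | zero =>
    induction b with
    | zero =>
      rw [QQ_eq, PP_zero_zero]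
      have := comp_empty 1 0 (by simp)
      have e1 : ∑ δ : Comp 0 (0+0), app δ.1 = app (default : Comp 0 0).1 :=
        Fintype.sum_unique (fun δ : Comp 0 0 => app δ.1)
      have e2 : ∑ δ : Comp (0+1) (0+0), app (Fin.tail δ.1) * I0 ^ (δ.1 0) = 0 :=
        Fintype.sum_empty (fun δ : Comp 1 0 => app (Fin.tail δ.1) * I0 ^ (δ.1 0))
      rw [e1, e2]
      simp [app]
    | succ b ih =>
      rw [QQ_eq, PP, ← ih, ← QQ_I0]
      have := comp_empty' (0 + b)
      have h : ∑ δ : Comp 0 (0 + (b+1)), app δ.1 = 0 := by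
        have : IsEmpty (Comp 0 (0 + (b+1))) := comp_empty' (0+b)
        rw [Fintype.sum_empty]
      rw [h, zero_add]; rfl
  | succ a iha =>
    have key : ∀ b, ∑ δ : Comp (a+1) (a+1+b), app δ.1 = PP a b * I1 := by
      intro b
      have h : a + 1 + b = a + b + 1 := by omega
      rw [h, QQ_I1, iha]
    induction b with
    | zero =>
      rw [QQ_eq, key, PP]
      have := comp_empty (a+1+1) (a+1+0) (by simp)
      rw [Fintype.sum_empty, add_zero]
    | succ b ih =>
      rw [QQ_eq, key, PP, ← ih, ← QQ_I0]; rfl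

/-- the starting sequence -/
noncomputable def e0 : ℕ → ℝ := fun n => if n = 0 then 1 else 0

/-- strictly increasing positive tuples -/
abbrev Tup (d : ℕ) := {ℓ : Fin d → ℕ // StrictMono ℓ ∧ ∀ i, 0 < ℓ i}

lemma opk_nonneg (k : ℕ) (h : ℕ → ℝ) (hh : 0 ≤ h) : 0 ≤ opk k h := by
  intro n
  rw [opk_apply]
  have : 0 ≤ ∑ m ∈ range n, h m := Finset.sum_nonneg fun i _ => hh i
  simp only [Pi.zero_apply]
  positivity

lemma app_nonneg (d : ℕ) (α : Fin d → ℕ) : 0 ≤ app α e0 := by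
  induction d with
  | zero =>
    intro n
    simp only [app, List.ofFn_zero, List.map_nil, List.reverse_nil, List.prod_nil,
      Module.End.one_apply, e0]
    split_ifs <;> simp
  | succ d ih =>
    rw [app_snoc]
    exact opk_nonneg _ _ (ih _)

/-- split off the last entry -/
def tupEquiv (d : ℕ) : (Σ ℓ : Tup d, {n : ℕ // univ.sup ℓ.1 < n}) ≃ Tup (d+1) where
  toFun p := ⟨Fin.snoc (α := fun _ => ℕ) p.1.1 p.2.1, by
    have hlt : ∀ i, p.1.1 i < p.2.1 := fun i =>
      lt_of_le_of_lt (Finset.le_sup (f := p.1.1) (mem_univ i)) p.2.2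
    constructor
    · intro i j
      refine Fin.lastCases ?_ (fun j => ?_) j
      · refine Fin.lastCases ?_ (fun i => ?_) i
        · intro h; exact absurd h (lt_irrefl _)
        · intro _; simpa using hlt i
      · refine Fin.lastCases ?_ (fun i => ?_) i
        · intro h; exact absurd h (not_lt.2 (Fin.le_last _))
        · intro h; simpa using p.1.2.1 (Fin.castSucc_lt_castSucc_iff.1 h)
    · intro i
      refine Fin.lastCases ?_ (fun j => ?_) i
      · simp only [Fin.snoc_last]; exact lt_of_le_of_lt (Nat.zero_le _) p.2.2
      · simpa using p.1.2.2 j⟩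
  invFun ℓ := ⟨⟨Fin.init ℓ.1, by
      constructor
      · intro i j hij
        exact ℓ.2.1 (Fin.castSucc_lt_castSucc_iff.2 hij)
      · intro i; exact ℓ.2.2 _⟩, ⟨ℓ.1 (Fin.last d), by
      rw [Finset.sup_lt_iff (by simpa using ℓ.2.2 (Fin.last d))]
      intro i _
      exact ℓ.2.1 (Fin.castSucc_lt_last i)⟩⟩
  left_inv p := by
    exact Sigma.subtype_ext (Subtype.ext (by simp)) (by simp)
  right_inv ℓ := by
    apply Subtype.ext
    simp

lemma sup_snoc (d : ℕ) (l : Fin d → ℕ) (n : ℕ) (h : univ.sup l < n) :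
    univ.sup (Fin.snoc (α := fun _ => ℕ) l n : Fin (d+1) → ℕ) = n := by
  apply le_antisymm
  · apply Finset.sup_le
    intro i _
    refine Fin.lastCases ?_ (fun j => ?_) i
    · simp
    · simpa using (lt_of_le_of_lt (Finset.le_sup (f := l) (mem_univ j)) h).le
  · have := Finset.le_sup (f := (Fin.snoc (α := fun _ => ℕ) l n : Fin (d+1) → ℕ))
      (mem_univ (Fin.last d))
    simpa using this

lemma opk_ofReal (k : ℕ) (h : ℕ → ℝ) (hh : 0 ≤ h) (n : ℕ) :
    ENNReal.ofReal (opk k h n) =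
      ENNReal.ofReal ((n : ℝ) ^ k)⁻¹ * ∑ m ∈ range n, ENNReal.ofReal (h m) := by
  rw [opk_apply, div_eq_inv_mul, ENNReal.ofReal_mul (by positivity),
    ENNReal.ofReal_sum_of_nonneg fun i _ => hh i]

lemma tup_sum (d : ℕ) (α : Fin d → ℕ) (φ : ℕ → ENNReal) :
    ∑' ℓ : Tup d, ENNReal.ofReal (∏ i, ((ℓ.1 i : ℝ) ^ (α i))⁻¹) * φ (univ.sup ℓ.1) =
      ∑' n, ENNReal.ofReal (app α e0 n) * φ n := by
  induction d generalizing φ with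
  | zero =>
    have hu : Unique (Tup 0) :=
      { default := ⟨fun i => i.elim0, by intro i; exact i.elim0, fun i => i.elim0⟩
        uniq := fun v => Subtype.ext (by ext i; exact i.elim0) }
    rw [tsum_eq_single (default : Tup 0) (fun b hb => (hb (Subsingleton.elim _ _)).elim)]
    rw [tsum_eq_single 0 (fun b hb => by simp [app, e0, hb])]
    simp [app, e0]
  | succ d ih =>
    rw [← (tupEquiv d).tsum_eq, ENNReal.tsum_sigma']
    have h1 : ∀ l : Tup d, ∑' n : {n : ℕ // univ.sup l.1 < n},
        ENNReal.ofReal (∏ i, ((((tupEquiv d ⟨l, n⟩).1 i : ℕ) : ℝ) ^ (α i))⁻¹) *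
          φ (univ.sup (tupEquiv d ⟨l, n⟩).1) =
        ENNReal.ofReal (∏ i, ((l.1 i : ℝ) ^ (Fin.init α i))⁻¹) *
          (fun m => ∑' n : ℕ, if m < n then
            ENNReal.ofReal ((n : ℝ) ^ α (Fin.last d))⁻¹ * φ n else 0) (univ.sup l.1) := by
      intro l
      simp only []
      rw [← ENNReal.tsum_mul_left]
      have := tsum_subtype {n : ℕ | univ.sup l.1 < n} (fun n => 
        ENNReal.ofReal (∏ i, ((l.1 i : ℝ) ^ (Fin.init α i))⁻¹) * 
          (ENNReal.ofReal ((n : ℝ) ^ α (Fin.last d))⁻¹ * φ n))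
      have e2 : ∀ n : ℕ, ENNReal.ofReal (∏ i, ((l.1 i : ℝ) ^ (Fin.init α i))⁻¹) *
          (if univ.sup l.1 < n then
            ENNReal.ofReal ((n : ℝ) ^ α (Fin.last d))⁻¹ * φ n else 0) =
          Set.indicator {n : ℕ | univ.sup l.1 < n} (fun n => 
        ENNReal.ofReal (∏ i, ((l.1 i : ℝ) ^ (Fin.init α i))⁻¹) * 
          (ENNReal.ofReal ((n : ℝ) ^ α (Fin.last d))⁻¹ * φ n)) n := by
        intro n
        simp only [Set.indicator, Set.mem_ofPred_eq]
        split_ifs <;> simp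
      simp_rw [e2]
      rw [← this]
      refine tsum_congr fun n => ?_
      have e3 : (tupEquiv d ⟨l, n⟩).1 = Fin.snoc (α := fun _ => ℕ) l.1 n.1 := rfl
      rw [e3, sup_snoc d l.1 n.1 n.2, Fin.prod_univ_castSucc, ENNReal.ofReal_mul
        (Finset.prod_nonneg fun i _ => by positivity)]
      simp [Fin.init_def, mul_assoc]
    rw [tsum_congr h1]
    refine (ih (Fin.init α) (fun m => ∑' n : ℕ, if m < n then
            ENNReal.ofReal ((n : ℝ) ^ α (Fin.last d))⁻¹ * φ n else 0)).trans ?_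
    simp_rw [← ENNReal.tsum_mul_left]
    rw [ENNReal.tsum_comm]
    refine tsum_congr fun n => ?_
    rw [app_snoc, Module.End.mul_apply, opk_ofReal _ _ (app_nonneg _ _)]
    rw [tsum_eq_sum (s := range n)]
    · rw [Finset.mul_sum, Finset.sum_mul]
      refine Finset.sum_congr rfl fun m hm => ?_
      rw [if_pos (Finset.mem_range.1 hm)]
      ring
    · intro m hm
      rw [if_neg (fun h => hm (Finset.mem_range.2 h))]; simp

lemma mzv_eq (d : ℕ) (α : Fin d → ℕ) : mzv α = ∑' n, app α e0 n := by
  have h := tup_sum d α 1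
  simp only [Pi.one_apply, mul_one] at h
  have h2 := congrArg ENNReal.toReal h
  rw [ENNReal.tsum_toReal_eq (fun _ => ENNReal.ofReal_ne_top),
    ENNReal.tsum_toReal_eq (fun _ => ENNReal.ofReal_ne_top)] at h2
  rw [mzv]
  convert h2 using 2
  · ext ℓ
    rw [ENNReal.toReal_ofReal (Finset.prod_nonneg fun i _ => by positivity)]
  · ext n
    rw [ENNReal.toReal_ofReal (app_nonneg d α n)]

/-- sequences of size O(n^(-1/2)) -/
def BB : Submodule ℝ (ℕ → ℝ) where
  carrier := {h | ∃ C, ∀ n : ℕ, |h n| ≤ C / √(n + 1)}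
  zero_mem' := ⟨0, by simp⟩
  add_mem' := by
    rintro f g ⟨C, hC⟩ ⟨D, hD⟩
    refine ⟨C + D, fun n => ?_⟩
    rw [add_div]
    exact (abs_add_le _ _).trans (add_le_add (hC n) (hD n))
  smul_mem' := by
    rintro c f ⟨C, hC⟩
    refine ⟨|c| * C, fun n => ?_⟩
    rw [Pi.smul_apply, smul_eq_mul, abs_mul, mul_div_assoc]
    exact mul_le_mul_of_nonneg_left (hC n) (abs_nonneg _)

lemma e0_mem : e0 ∈ BB := by
  refine ⟨1, fun n => ?_⟩
  rcases Nat.eq_zero_or_pos n with rfl | h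
  · simp [e0]
  · simp [e0, h.ne']

lemma I0_mem (h : ℕ → ℝ) (hh : h ∈ BB) : I0 h ∈ BB := by
  obtain ⟨C, hC⟩ := hh
  refine ⟨C, fun n => ?_⟩
  refine le_trans ?_ (hC n)
  rw [I0_apply, abs_div, Nat.abs_cast]
  rcases Nat.eq_zero_or_pos n with rfl | hn
  · simp
  · exact div_le_self (abs_nonneg _) (by exact_mod_cast hn)

lemma sum_sqrt (n : ℕ) : ∑ m ∈ range n, 1 / √((m : ℝ) + 1) ≤ 2 * √n := by
  induction n with
  | zero => simp
  | succ n ih =>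
    rw [Finset.sum_range_succ]
    have h0 : (0:ℝ) < √((n:ℝ)+1) := by positivity
    have h1 : (√((n:ℝ)+1))^2 = n + 1 := Real.sq_sqrt (by positivity)
    have h2 : (√(n:ℝ))^2 = n := Real.sq_sqrt (by positivity)
    have h3 : 1 / √((n : ℝ) + 1) ≤ 2 * √((n:ℝ)+1) - 2 * √n := by
      rw [div_le_iff₀ h0]
      nlinarith [sq_nonneg (√((n:ℝ)+1) - √n)]
    push_cast
    linarith

lemma I1_mem (h : ℕ → ℝ) (hh : h ∈ BB) : I1 h ∈ BB := by
  obtain ⟨C, hC⟩ := hh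
  have hC0 : 0 ≤ C := by
    have := (abs_nonneg _).trans (hC 0)
    simpa using this
  refine ⟨4 * C, fun n => ?_⟩
  rw [I1_apply, abs_div, Nat.abs_cast]
  rcases Nat.eq_zero_or_pos n with rfl | hn
  · simp; positivity
  have hn' : (1:ℝ) ≤ n := by exact_mod_cast hn
  have h1 : |∑ m ∈ range n, h m| ≤ C * (2 * √n) := by
    refine (Finset.abs_sum_le_sum_abs _ _).trans ?_
    refine (Finset.sum_le_sum fun i _ => hC i).trans ?_
    rw [show ∑ i ∈ range n, C / √((i:ℝ)+1) = C * ∑ m ∈ range n, 1 / √((m : ℝ) + 1) by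
      rw [Finset.mul_sum]; simp [div_eq_mul_inv]]
    exact mul_le_mul_of_nonneg_left (sum_sqrt n) hC0
  have h0 : (0:ℝ) < √((n:ℝ)+1) := by positivity
  rw [div_le_div_iff₀ (by positivity) h0]
  have h2 : √(n:ℝ) * √((n:ℝ)+1) ≤ 2 * n := by
    rw [← Real.sqrt_mul (by positivity)]
    apply Real.sqrt_le_iff.2 ⟨by positivity, by nlinarith⟩
  calc _ ≤ C * (2 * √n) * √((n:ℝ)+1) := by gcongr
    _ = 2 * C * (√(n:ℝ) * √((n:ℝ)+1)) := by ring
    _ ≤ 2 * C * (2 * n) := by gcongr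
    _ = _ := by ring

lemma PP_mem (a b : ℕ) (h : ℕ → ℝ) (hh : h ∈ BB) : PP a b h ∈ BB := by
  induction a generalizing b h with
  | zero =>
    induction b generalizing h with
    | zero => simpa [PP] using hh
    | succ b ih => rw [PP]; exact ih _ (I0_mem _ hh)
  | succ a iha =>
    induction b generalizing h with
    | zero => rw [PP]; exact iha _ _ (I1_mem _ hh)
    | succ b ih =>
      rw [PP]
      exact BB.add_mem (iha _ _ (I1_mem _ hh)) (ih _ (I0_mem _ hh))

lemma opk_mem (k : ℕ) (h : ℕ → ℝ) (hh : h ∈ BB) : opk (k+1) h ∈ BB := by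
  induction k with
  | zero => exact I1_mem _ hh
  | succ k ih => rw [opk_succ]; exact I0_mem _ ih

lemma app_mem (d : ℕ) (v : Fin d → ℕ) (hv : ∀ i, 0 < v i) (h : ℕ → ℝ) (hh : h ∈ BB) :
    app v h ∈ BB := by
  induction d with
  | zero => simpa [app] using hh
  | succ d ih =>
    rw [app_snoc]
    have := hv (Fin.last d)
    obtain ⟨k, hk⟩ : ∃ k, v (Fin.last d) = k + 1 := ⟨v (Fin.last d) - 1, by omega⟩
    rw [hk]
    exact opk_mem _ _ (ih _ fun i => hv _)

lemma summable_I0 (h : ℕ → ℝ) (hh : h ∈ BB) : Summable (I0 h) := by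
  obtain ⟨C, hC⟩ := hh
  have hC0 : 0 ≤ C := by
    have := (abs_nonneg _).trans (hC 0)
    simpa using this
  have hs : Summable fun n : ℕ => C * ((n:ℝ) ^ (3/2 : ℝ))⁻¹ :=
    (Real.summable_nat_rpow_inv.2 (by norm_num)).mul_left C
  refine Summable.of_norm_bounded hs fun n => ?_
  rw [I0_apply, norm_div, Real.norm_eq_abs, Real.norm_eq_abs, Nat.abs_cast]
  rcases Nat.eq_zero_or_pos n with rfl | hn
  · simp
  have hn' : (0:ℝ) < n := by exact_mod_cast hn
  have : (n:ℝ) ^ (3/2:ℝ) = n * √n := by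
    rw [Real.sqrt_eq_rpow, show (3/2:ℝ) = 1 + 1/2 by norm_num, Real.rpow_add hn', Real.rpow_one]
  rw [this, ← div_eq_mul_inv]
  have h1 : |h n| ≤ C / √n := by
    refine (hC n).trans ?_
    gcongr
    linarith
  calc |h n| / n ≤ (C / √n) / n := by gcongr
    _ = _ := by rw [div_div, mul_comm]

/-- value at one of the primitive of h dt/t -/
noncomputable def sg (h : ℕ → ℝ) : ℝ := ∑' n, I0 h n

lemma sg_sum {ι : Type*} (s : Finset ι) (h : ι → ℕ → ℝ) (hh : ∀ i ∈ s, h i ∈ BB) :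
    sg (∑ i ∈ s, h i) = ∑ i ∈ s, sg (h i) := by
  unfold sg
  rw [map_sum, ← Summable.tsum_finsetSum (fun i hi => summable_I0 _ (hh i hi))]
  simp

lemma sg_smul (c : ℝ) (h : ℕ → ℝ) : sg (c • h) = c * sg h := by
  unfold sg
  rw [map_smul, ← tsum_mul_left]
  rfl

lemma sg_add (g h : ℕ → ℝ) (hg : g ∈ BB) (hh : h ∈ BB) : sg (g + h) = sg g + sg h := by
  unfold sg
  rw [map_add, ← Summable.tsum_add (summable_I0 _ hg) (summable_I0 _ hh)]
  rfl

lemma sum_app (a b : ℕ) (w : ℕ → ℝ) :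
    ∑ β : Comp (a+1) (a+b+1), app β.1 w = PP a b (I1 w) := by
  have := QQ_I1 a b
  rw [QQ_PP] at this
  have h := congrArg (fun T : Module.End ℝ (ℕ → ℝ) => T w) this
  simpa [LinearMap.sum_apply] using h

lemma sum_app_tail (a b : ℕ) (w : ℕ → ℝ) :
    ∑ γ : Comp (a+1) (a+b+1), app (Fin.tail γ.1) ((I0 ^ (γ.1 0)) w) = PP a b (I0 w) := by
  have := QQ_I0 a b
  rw [QQ_PP] at this
  have h := congrArg (fun T : Module.End ℝ (ℕ → ℝ) => T w) this
  simpa [LinearMap.sum_apply] using h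

lemma I0_pow_mem (c : ℕ) (h : ℕ → ℝ) (hh : h ∈ BB) : (I0 ^ c) h ∈ BB := by
  induction c with
  | zero => simpa using hh
  | succ c ih => rw [pow_succ', Module.End.mul_apply]; exact I0_mem _ ih

lemma S2_eq (a₁ b₁ a₂ b₂ : ℕ) :
    S2 a₁ b₁ a₂ b₂ = sg (PP a₂ b₂ (I1 (I0 (PP a₁ b₁ (I1 e0))))) := by
  unfold S2
  rw [tsum_fintype]
  simp_rw [tsum_fintype]
  have h1 : ∀ (α : Comp (a₁ + 1) (a₁ + b₁ + 1)) (β : Comp (a₂ + 1) (a₂ + b₂ + 1)),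
      mzv (Fin.append (incLast α.1) (incLast β.1)) = sg (app β.1 (I0 (app α.1 e0))) := by
    intro α β
    rw [mzv_eq, app_append, app_incLast _ (by simp), app_incLast _ (by simp)]
    rfl
  have hα : ∀ α : Comp (a₁ + 1) (a₁ + b₁ + 1), I0 (app α.1 e0) ∈ BB := fun α =>
    I0_mem _ (app_mem _ _ α.2.1 _ e0_mem)
  have h2 : ∀ (α : Comp (a₁ + 1) (a₁ + b₁ + 1)),
      ∑ β : Comp (a₂ + 1) (a₂ + b₂ + 1), mzv (Fin.append (incLast α.1) (incLast β.1)) =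
      sg (PP a₂ b₂ (I1 (I0 (app α.1 e0)))) := by
    intro α
    simp_rw [h1]
    rw [← sg_sum _ _ (fun β _ => app_mem _ _ β.2.1 _ (hα α)), sum_app]
  simp_rw [h2]
  rw [← sg_sum _ _ (fun α _ => PP_mem _ _ _ (I1_mem _ (hα α)))]
  simp_rw [← map_sum, sum_app]

lemma S3_eq (a₁ b₁ a₂ b₂ a₃ b₃ : ℕ) :
    S3 a₁ b₁ a₂ b₂ a₃ b₃ = sg (PP a₃ b₃ (I0 (PP a₂ b₂ (I1 (PP a₁ b₁ (I1 e0)))))) := by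
  unfold S3
  rw [tsum_fintype]
  simp_rw [tsum_fintype]
  have h1 : ∀ (α : Comp (a₁ + 1) (a₁ + b₁ + 1)) (β : Comp (a₂ + 1) (a₂ + b₂ + 1))
      (γ : Comp (a₃ + 1) (a₃ + b₃ + 1)),
      mzv (incLast (Fin.append α.1 (Fin.append
      (Function.update β.1 (Fin.last a₂) (β.1 (Fin.last a₂) + γ.1 0))
      (Fin.tail γ.1)))) = sg (app (Fin.tail γ.1) ((I0 ^ (γ.1 0)) (app β.1 (app α.1 e0)))) := by
    intro α β γ
    rw [mzv_eq, app_incLast _ (by omega), app_append, app_append, app_update]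
    rfl
  have hα : ∀ α : Comp (a₁ + 1) (a₁ + b₁ + 1), app α.1 e0 ∈ BB := fun α =>
    app_mem _ _ α.2.1 _ e0_mem
  have hβ : ∀ (α : Comp (a₁ + 1) (a₁ + b₁ + 1)) (β : Comp (a₂ + 1) (a₂ + b₂ + 1)),
    app β.1 (app α.1 e0) ∈ BB := fun α β => app_mem _ _ β.2.1 _ (hα α)
  simp_rw [h1]
  have h2 : ∀ (α : Comp (a₁ + 1) (a₁ + b₁ + 1)) (β : Comp (a₂ + 1) (a₂ + b₂ + 1)),
      ∑ γ : Comp (a₃ + 1) (a₃ + b₃ + 1),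
        sg (app (Fin.tail γ.1) ((I0 ^ (γ.1 0)) (app β.1 (app α.1 e0)))) =
      sg (PP a₃ b₃ (I0 (app β.1 (app α.1 e0)))) := by
    intro α β
    rw [← sg_sum _ _ (fun γ _ => app_mem _ _ (fun i => γ.2.1 i.succ) _
      (I0_pow_mem _ _ (hβ α β))), sum_app_tail]
  simp_rw [h2]
  have h3 : ∀ (α : Comp (a₁ + 1) (a₁ + b₁ + 1)),
      ∑ β : Comp (a₂ + 1) (a₂ + b₂ + 1), sg (PP a₃ b₃ (I0 (app β.1 (app α.1 e0)))) =
      sg (PP a₃ b₃ (I0 (PP a₂ b₂ (I1 (app α.1 e0))))) := by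
    intro α
    rw [← sg_sum _ _ (fun β _ => PP_mem _ _ _ (I0_mem _ (hβ α β)))]
    simp_rw [← map_sum, sum_app]
  simp_rw [h3]
  rw [← sg_sum _ _ (fun α _ => PP_mem _ _ _ (I0_mem _ (PP_mem _ _ _ (I1_mem _ (hα α)))))]
  simp_rw [← map_sum, sum_app]

/-! generating series -/

/-- coefficient ring: the inner variable is x, the outer one is y -/
abbrev RR := PowerSeries (PowerSeries ℝ)
/-- power series in t -/
abbrev AA := PowerSeries RR

/-- coefficient of x^a y^b, as a sequence in n -/
noncomputable def co (a b : ℕ) (F : AA) : ℕ → ℝ := fun n =>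
  PowerSeries.coeff a (PowerSeries.coeff b (PowerSeries.coeff n F))

/-- series with given coefficients -/
noncomputable def arr (F : ℕ → ℕ → ℕ → ℝ) : AA :=
  PowerSeries.mk fun n => PowerSeries.mk fun b => PowerSeries.mk fun a => F a b n

lemma co_arr (F : ℕ → ℕ → ℕ → ℝ) (a b : ℕ) : co a b (arr F) = F a b := by
  ext n; simp [co, arr]

lemma co_ext {F G : AA} (h : ∀ a b, co a b F = co a b G) : F = G := by
  ext n b a
  exact congrFun (h a b) n

lemma co_add (F G : AA) (a b : ℕ) : co a b (F + G) = co a b F + co a b G := by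
  ext n; simp [co]

lemma co_mul (F G : AA) (k l n : ℕ) : co k l (F * G) n =
    ∑ p ∈ antidiagonal n, ∑ b ∈ antidiagonal l, ∑ a ∈ antidiagonal k,
      co a.1 b.1 F p.1 * co a.2 b.2 G p.2 := by
  simp [co, PowerSeries.coeff_mul]

/-- Euler operator -/
noncomputable def th (F : AA) : AA := PowerSeries.X * PowerSeries.derivative RR F

lemma th_mul (F G : AA) : th (F * G) = th F * G + F * th G := by
  simp [th]; ring

lemma co_th (F : AA) (a b n : ℕ) : co a b (th F) n = n * co a b F n := by
  unfold co th
  cases n with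
  | zero => simp
  | succ n =>
    rw [PowerSeries.coeff_succ_X_mul, PowerSeries.coeff_derivative, mul_comm]
    have : ((n : RR) + 1) = PowerSeries.C (PowerSeries.C ((n:ℝ) + 1)) := by simp
    rw [this, PowerSeries.coeff_C_mul, PowerSeries.coeff_C_mul]
    push_cast; rfl

/-- t/(1-t) -/
noncomputable def JJ : AA := PowerSeries.X * PowerSeries.mk 1

lemma coeff_JJ (F : AA) (n : ℕ) :
    PowerSeries.coeff n (JJ * F) = ∑ m ∈ range n, PowerSeries.coeff m F := by
  cases n with
  | zero => simp [JJ, mul_assoc]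
  | succ n =>
    rw [JJ, mul_assoc, PowerSeries.coeff_succ_X_mul, mul_comm, PowerSeries.coeff_mul,
      Finset.Nat.sum_antidiagonal_eq_sum_range_succ_mk]
    simp

lemma co_JJ (F : AA) (a b n : ℕ) : co a b (JJ * F) n = ∑ m ∈ range n, co a b F m := by
  unfold co; rw [coeff_JJ]; simp

/-- the variable x -/
noncomputable def xx : AA := PowerSeries.C (PowerSeries.C PowerSeries.X)
/-- the variable y -/
noncomputable def yy : AA := PowerSeries.C PowerSeries.X
/-- real constants -/
noncomputable def cc (c : ℝ) : AA := PowerSeries.C (PowerSeries.C (PowerSeries.C c))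

lemma co_cc (c : ℝ) (F : AA) (a b : ℕ) : co a b (cc c * F) = c • co a b F := by
  ext n; simp [co, cc]
lemma co_xx_zero (F : AA) (b : ℕ) : co 0 b (xx * F) = 0 := by
  ext n; simp [co, xx]
lemma co_xx_succ (F : AA) (a b : ℕ) : co (a+1) b (xx * F) = co a b F := by
  ext n; simp [co, xx, PowerSeries.coeff_succ_X_mul]
lemma co_yy_zero (F : AA) (a : ℕ) : co a 0 (yy * F) = 0 := by
  ext n; simp [co, yy]
lemma co_yy_succ (F : AA) (a b : ℕ) : co a (b+1) (yy * F) = co a b F := by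
  ext n; simp [co, yy, PowerSeries.coeff_succ_X_mul]
lemma cc_add (c d : ℝ) : cc (c + d) = cc c + cc d := by simp [cc]

lemma I0_co_JJ (F : AA) (a b : ℕ) : I0 (co a b (JJ * F)) = I1 (co a b F) := by
  ext n; rw [I0_apply, I1_apply, co_JJ]

/-- Duhamel sum -/
noncomputable def duh (c d : ℝ) (G : ℕ → ℕ → ℕ → ℝ) (k l : ℕ) : ℕ → ℝ :=
  ∑ a ∈ antidiagonal k, ∑ b ∈ antidiagonal l,
    (c ^ a.1 * d ^ b.1) • PP a.1 b.1 (G a.2 b.2)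

lemma duh_zero_zero (c d : ℝ) (G : ℕ → ℕ → ℕ → ℝ) : duh c d G 0 0 = G 0 0 := by
  simp [duh, PP]

lemma duh_succ_zero (c d : ℝ) (G : ℕ → ℕ → ℕ → ℝ) (k : ℕ) :
    duh c d G (k+1) 0 = G (k+1) 0 + c • I1 (duh c d G k 0) := by
  simp only [duh, Finset.Nat.sum_antidiagonal_succ, Finset.Nat.antidiagonal_zero,
    Finset.sum_singleton, PP_zero_zero, PP_succ_zero, map_sum, map_smul, Finset.smul_sum,
    Module.End.mul_apply, smul_smul]
  congr 1
  · simp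
  · refine Finset.sum_congr rfl fun a _ => ?_
    congr 1; ring

lemma duh_zero_succ (c d : ℝ) (G : ℕ → ℕ → ℕ → ℝ) (l : ℕ) :
    duh c d G 0 (l+1) = G 0 (l+1) + d • I0 (duh c d G 0 l) := by
  simp only [duh, Finset.Nat.sum_antidiagonal_succ, Finset.Nat.antidiagonal_zero,
    Finset.sum_singleton, PP_zero_zero, PP_zero_succ, map_sum, map_smul, Finset.smul_sum,
    Module.End.mul_apply, smul_smul]
  congr 1
  · simp
  · refine Finset.sum_congr rfl fun a _ => ?_
    congr 1; ring

lemma duh_succ_succ (c d : ℝ) (G : ℕ → ℕ → ℕ → ℝ) (k l : ℕ) :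
    duh c d G (k+1) (l+1) = G (k+1) (l+1) + c • I1 (duh c d G k (l+1)) +
      d • I0 (duh c d G (k+1) l) := by
  simp only [duh, Finset.Nat.sum_antidiagonal_succ, PP_zero_zero, PP_zero_succ, PP_succ_zero,
    PP_succ_succ, map_sum, map_add, map_smul, Finset.smul_sum,
    Module.End.mul_apply, smul_smul, smul_add, LinearMap.add_apply, Finset.sum_add_distrib]
  simp only [pow_succ, pow_zero, one_mul, mul_one, one_smul, Module.End.one_apply]
  have e1 : ∀ (a b : ℕ), c * (c ^ a * (d ^ b * d)) = c ^ a * c * (d ^ b * d) := by intros; ring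
  have e2 : ∀ (a b : ℕ), d * (c ^ a * c * (d ^ b)) = c ^ a * c * (d ^ b * d) := by intros; ring
  simp only [e1, e2, mul_comm c, mul_comm d]
  abel

lemma duhamel (c d : ℝ) (F G : AA) (h0 : PowerSeries.coeff 0 F = 0)
    (h : th F = G + cc c * (xx * (JJ * F)) + cc d * (yy * F)) (k l : ℕ) :
    co k l F = duh c d (fun a b => I0 (co a b G)) k l := by
  have key : ∀ a b, co a b F = I0 (co a b G) + c • I0 (co a b (xx * (JJ * F))) +
      d • I0 (co a b (yy * F)) := by
    intro a b
    have h1 := congrArg (co a b) h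
    rw [co_add, co_add, co_cc, co_cc] at h1
    rw [← map_smul, ← map_smul, ← map_add, ← map_add, ← h1]
    ext n
    rw [I0_apply, co_th]
    rcases Nat.eq_zero_or_pos n with rfl | hn
    · simp [co, h0]
    · field_simp
  induction k generalizing l with
  | zero =>
    induction l with
    | zero => rw [key, duh_zero_zero, co_xx_zero, co_yy_zero]; simp
    | succ l ih => rw [key, duh_zero_succ, co_xx_zero, co_yy_succ, ih]; simp
  | succ k ihk =>
    induction l with
    | zero => rw [key, duh_succ_zero, co_xx_succ, co_yy_zero, I0_co_JJ, ihk]; simp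
    | succ l ih => rw [key, duh_succ_succ, co_xx_succ, co_yy_succ, I0_co_JJ, ihk, ih]

/-- words followed by one letter I1 -/
noncomputable def ff (a b : ℕ) : ℕ → ℝ := PP a b (I1 e0)

lemma ff_mem (a b : ℕ) : ff a b ∈ BB := PP_mem _ _ _ (I1_mem _ e0_mem)

lemma ff_zero_zero : ff 0 0 = I1 e0 := by simp [ff, PP]
lemma ff_succ_zero (a : ℕ) : ff (a+1) 0 = I1 (ff a 0) := by
  rw [ff, PP_succ_zero]; rfl
lemma ff_zero_succ (b : ℕ) : ff 0 (b+1) = I0 (ff 0 b) := by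
  rw [ff, PP_zero_succ]; rfl
lemma ff_succ_succ (a b : ℕ) : ff (a+1) (b+1) = I1 (ff a (b+1)) + I0 (ff (a+1) b) := by
  rw [ff, PP_succ_succ]; rfl

lemma ff_at_zero (a b : ℕ) : ff a b 0 = 0 := by
  rcases a with _ | a <;> rcases b with _ | b
  · simp [ff_zero_zero, I1_apply]
  · simp [ff_zero_succ, I0_apply]
  · simp [ff_succ_zero, I1_apply]
  · simp [ff_succ_succ, I0_apply, I1_apply]

lemma mul_I0 (h : ℕ → ℝ) (h0 : h 0 = 0) (n : ℕ) : n * I0 h n = h n := by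
  rw [I0_apply]
  rcases Nat.eq_zero_or_pos n with rfl | hn
  · simp [h0]
  · field_simp

lemma mul_I1 (h : ℕ → ℝ) (n : ℕ) : n * I1 h n = ∑ m ∈ range n, h m := by
  rw [I1_apply]
  rcases Nat.eq_zero_or_pos n with rfl | hn
  · simp
  · field_simp

/-- generating series of ff -/
noncomputable def fs (μ : ℝ) : AA := arr fun a b => μ ^ a • ff a b
/-- generating series of its primitive -/
noncomputable def gs (μ : ℝ) : AA := arr fun a b => μ ^ a • I0 (ff a b)

lemma co_one (a b : ℕ) : co a b 1 = if a = 0 ∧ b = 0 then e0 else 0 := by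
  ext n
  unfold co e0
  rw [PowerSeries.coeff_one]
  by_cases hn : n = 0
  · rw [if_pos hn, PowerSeries.coeff_one]
    by_cases hb : b = 0
    · rw [if_pos hb, PowerSeries.coeff_one]
      by_cases ha : a = 0 <;> simp [ha, hb, hn]
    · simp [hb]
  · split_ifs <;> simp [hn]

lemma th_fs (μ : ℝ) :
    th (fs μ) = JJ * 1 + cc μ * (xx * (JJ * fs μ)) + cc 1 * (yy * fs μ) := by
  apply co_ext
  intro a b
  ext n
  rw [co_th, co_add, co_add, co_cc, co_cc, Pi.add_apply, Pi.add_apply, Pi.smul_apply,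
    Pi.smul_apply, co_JJ, co_one, fs, co_arr, ← fs]
  rw [Pi.smul_apply, smul_eq_mul, mul_left_comm]
  rcases a with _ | a <;> rcases b with _ | b
  · rw [co_xx_zero, co_yy_zero, ff_zero_zero, mul_I1]; simp
  · rw [co_xx_zero, co_yy_succ, ff_zero_succ, mul_I0 _ (ff_at_zero _ _), fs, co_arr]; simp
  · rw [co_xx_succ, co_yy_zero, ff_succ_zero, mul_I1, co_JJ, fs, co_arr]
    simp [pow_succ, Finset.mul_sum, mul_comm, mul_assoc]
  · rw [co_xx_succ, co_yy_succ, ff_succ_succ, Pi.add_apply, mul_add, mul_I1,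
      mul_I0 _ (ff_at_zero _ _), co_JJ, fs, co_arr, co_arr]
    simp [pow_succ, Finset.mul_sum, mul_comm, mul_assoc, mul_add]

lemma th_gs (μ : ℝ) : th (gs μ) = fs μ := by
  apply co_ext
  intro a b
  ext n
  rw [co_th, gs, fs, co_arr, co_arr]
  simp only [Pi.smul_apply, smul_eq_mul]
  rw [mul_left_comm, mul_I0 _ (ff_at_zero _ _)]

lemma fs_coeff (μ : ℝ) : PowerSeries.coeff 0 (fs μ) = 0 := by
  ext b a
  simp [fs, arr, ff_at_zero]

lemma mul_coeff (F G : AA) (h : PowerSeries.coeff 0 F = 0) : PowerSeries.coeff 0 (F * G) = 0 := by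
  rw [PowerSeries.coeff_zero_eq_constantCoeff] at *
  rw [map_mul, h, zero_mul]

lemma co_ff (μ₁ μ₂ : ℝ) (k l : ℕ) : co k l (fs μ₁ * fs μ₂) =
    duh (μ₁ + μ₂) 2 (fun a b => (μ₁ ^ a + μ₂ ^ a) • I1 (ff a b)) k l := by
  rw [duhamel (μ₁ + μ₂) 2 (fs μ₁ * fs μ₂) (JJ * (fs μ₁ + fs μ₂))]
  · congr 1
    funext a b
    rw [I0_co_JJ, co_add, fs, fs, co_arr, co_arr, ← add_smul, map_smul]
  · exact mul_coeff _ _ (fs_coeff _)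
  · rw [th_mul, th_fs, th_fs, show (2:ℝ) = 1 + 1 by norm_num, cc_add, cc_add]
    ring

lemma co_fg (μ₁ μ₂ : ℝ) (k l : ℕ) : co k l (fs μ₁ * gs μ₂) =
    duh μ₁ 1 (fun a b => μ₂ ^ a • I1 (I0 (ff a b)) + I0 (co a b (fs μ₁ * fs μ₂))) k l := by
  rw [duhamel μ₁ 1 (fs μ₁ * gs μ₂) (JJ * gs μ₂ + fs μ₁ * fs μ₂)]
  · congr 1
    funext a b
    rw [co_add, map_add, I0_co_JJ, gs, co_arr, map_smul]
  · exact mul_coeff _ _ (fs_coeff _)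
  · rw [th_mul, th_fs, th_gs]
    ring

lemma co_gg (μ₁ μ₂ : ℝ) (k l : ℕ) : co k l (gs μ₁ * gs μ₂) =
    I0 (co k l (fs μ₁ * gs μ₂) + co k l (fs μ₂ * gs μ₁)) := by
  have h : th (gs μ₁ * gs μ₂) = fs μ₁ * gs μ₂ + fs μ₂ * gs μ₁ := by
    rw [th_mul, th_gs, th_gs]; ring
  have h0 : PowerSeries.coeff 0 (gs μ₁ * gs μ₂) = 0 := by
    apply mul_coeff
    ext b a
    simp [gs, arr, I0_apply]
  rw [← co_add, ← h]
  ext n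
  rw [I0_apply, co_th]
  rcases Nat.eq_zero_or_pos n with rfl | hn
  · simp [co, h0]
  · field_simp

lemma duh_mem (c d : ℝ) (G : ℕ → ℕ → ℕ → ℝ) (hG : ∀ a b, G a b ∈ BB) (k l : ℕ) :
    duh c d G k l ∈ BB :=
  BB.sum_mem fun _ _ => BB.sum_mem fun _ _ => BB.smul_mem _ (PP_mem _ _ _ (hG _ _))

lemma sg_duh (c d : ℝ) (G : ℕ → ℕ → ℕ → ℝ) (hG : ∀ a b, G a b ∈ BB) (k l : ℕ) :
    sg (duh c d G k l) = ∑ a ∈ antidiagonal k, ∑ b ∈ antidiagonal l,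
      c ^ a.1 * d ^ b.1 * sg (PP a.1 b.1 (G a.2 b.2)) := by
  have hm : ∀ a b : ℕ × ℕ, (c ^ a.1 * d ^ b.1) • PP a.1 b.1 (G a.2 b.2) ∈ BB := fun a b =>
    BB.smul_mem _ (PP_mem _ _ _ (hG _ _))
  rw [duh, sg_sum _ _ (fun a _ => BB.sum_mem fun b _ => hm a b)]
  refine Finset.sum_congr rfl fun a _ => ?_
  rw [sg_sum _ _ (fun b _ => hm a b)]
  refine Finset.sum_congr rfl fun b _ => ?_
  rw [sg_smul]

lemma co_ff_mem (μ₁ μ₂ : ℝ) (k l : ℕ) : co k l (fs μ₁ * fs μ₂) ∈ BB := by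
  rw [co_ff]
  exact duh_mem _ _ _ (fun a b => BB.smul_mem _ (I1_mem _ (ff_mem _ _))) _ _

lemma co_fg_mem (μ₁ μ₂ : ℝ) (k l : ℕ) : co k l (fs μ₁ * gs μ₂) ∈ BB := by
  rw [co_fg]
  exact duh_mem _ _ _ (fun a b => BB.add_mem (BB.smul_mem _ (I1_mem _ (I0_mem _ (ff_mem _ _))))
    (I0_mem _ (co_ff_mem _ _ _ _))) _ _

lemma sg_PP_ff (μ₁ μ₂ : ℝ) (a b k l : ℕ) : sg (PP a b (I0 (co k l (fs μ₁ * fs μ₂)))) =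
    ∑ a' ∈ antidiagonal k, ∑ b' ∈ antidiagonal l,
      (μ₁ + μ₂) ^ a'.1 * 2 ^ b'.1 * (μ₁ ^ a'.2 + μ₂ ^ a'.2) * S3 a'.2 b'.2 a'.1 b'.1 a b := by
  rw [co_ff, duh]
  simp only [map_sum, map_smul]
  have hm : ∀ a' b' : ℕ × ℕ, ((μ₁ + μ₂) ^ a'.1 * (2:ℝ) ^ b'.1) •
      (μ₁ ^ a'.2 + μ₂ ^ a'.2) • PP a b (I0 (PP a'.1 b'.1 (I1 (ff a'.2 b'.2)))) ∈ BB := fun a' b' =>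
    BB.smul_mem _ (BB.smul_mem _ (PP_mem _ _ _ (I0_mem _ (PP_mem _ _ _ (I1_mem _ (ff_mem _ _))))))
  rw [sg_sum _ _ (fun a' _ => BB.sum_mem fun b' _ => hm a' b')]
  refine Finset.sum_congr rfl fun a' _ => ?_
  rw [sg_sum _ _ (fun b' _ => hm a' b')]
  refine Finset.sum_congr rfl fun b' _ => ?_
  rw [sg_smul, sg_smul, S3_eq, ff]
  ring

lemma sg_fg (μ₁ μ₂ : ℝ) (k l : ℕ) : sg (co k l (fs μ₁ * gs μ₂)) =
    ∑ a ∈ antidiagonal k, ∑ b ∈ antidiagonal l,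
      (μ₁ ^ a.1 * μ₂ ^ a.2 * S2 a.2 b.2 a.1 b.1 +
      ∑ a' ∈ antidiagonal a.2, ∑ b' ∈ antidiagonal b.2,
        μ₁ ^ a.1 * ((μ₁ + μ₂) ^ a'.1 * 2 ^ b'.1 * (μ₁ ^ a'.2 + μ₂ ^ a'.2) *
          S3 a'.2 b'.2 a'.1 b'.1 a.1 b.1)) := by
  have h1 : ∀ a b, μ₂ ^ a • I1 (I0 (ff a b)) ∈ BB := fun a b =>
    BB.smul_mem _ (I1_mem _ (I0_mem _ (ff_mem _ _)))
  have h2 : ∀ a b, I0 (co a b (fs μ₁ * fs μ₂)) ∈ BB := fun a b => I0_mem _ (co_ff_mem _ _ _ _)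
  rw [co_fg, sg_duh _ _ _ (fun a b => BB.add_mem (h1 a b) (h2 a b))]
  refine Finset.sum_congr rfl fun a _ => Finset.sum_congr rfl fun b _ => ?_
  rw [map_add, sg_add _ _ (PP_mem _ _ _ (h1 _ _)) (PP_mem _ _ _ (h2 _ _)), sg_PP_ff, map_smul,
    sg_smul, S2_eq, ff]
  simp only [← Finset.mul_sum]
  rw [one_pow]
  ring

lemma triple_rev {M : Type*} [AddCommMonoid M] (T : ℕ → ℕ → ℕ → M) (k : ℕ) :
    ∑ a ∈ antidiagonal k, ∑ a' ∈ antidiagonal a.2, T a.1 a'.1 a'.2 =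
    ∑ a ∈ antidiagonal k, ∑ a' ∈ antidiagonal a.2, T a'.2 a'.1 a.1 := by
  rw [Finset.sum_sigma', Finset.sum_sigma']
  refine Finset.sum_nbij' (fun p => ⟨(p.2.2, p.2.1 + p.1.1), (p.2.1, p.1.1)⟩)
    (fun p => ⟨(p.2.2, p.2.1 + p.1.1), (p.2.1, p.1.1)⟩) ?_ ?_ ?_ ?_ ?_
  · rintro ⟨⟨a, b⟩, c, d⟩ h
    simp only [mem_sigma, HasAntidiagonal.mem_antidiagonal] at h ⊢
    obtain ⟨h1, h2⟩ := h
    exact ⟨by change d + (c + a) = k; change c + d = b at h2; change a + b = k at h1; omega, trivial⟩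
  · rintro ⟨⟨a, b⟩, c, d⟩ h
    simp only [mem_sigma, HasAntidiagonal.mem_antidiagonal] at h ⊢
    obtain ⟨h1, h2⟩ := h
    exact ⟨by change d + (c + a) = k; change c + d = b at h2; change a + b = k at h1; omega, trivial⟩
  · rintro ⟨⟨a, b⟩, c, d⟩ h
    simp only [mem_sigma, HasAntidiagonal.mem_antidiagonal] at h
    obtain ⟨h1, h2⟩ := h
    simp [h2]
  · rintro ⟨⟨a, b⟩, c, d⟩ h
    simp only [mem_sigma, HasAntidiagonal.mem_antidiagonal] at h
    obtain ⟨h1, h2⟩ := h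
    simp [h2]
  · rintro ⟨⟨a, b⟩, c, d⟩ h
    rfl

lemma rhs_eq (μ₁ μ₂ : ℝ) (k l : ℕ) :
    (∑ a ∈ antidiagonal k, ∑ b ∈ antidiagonal l,
      (μ₁ ^ a.1 * μ₂ ^ a.2 + μ₂ ^ a.1 * μ₁ ^ a.2) * S2 a.1 b.1 a.2 b.2) +
    ∑ a ∈ antidiagonal k, ∑ a' ∈ antidiagonal a.2,
      ∑ b ∈ antidiagonal l, ∑ b' ∈ antidiagonal b.2,
        (μ₁ ^ a.1 + μ₂ ^ a.1) * (μ₁ + μ₂) ^ a'.1 * (2 : ℝ) ^ b'.1 *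
          (μ₁ ^ a'.2 + μ₂ ^ a'.2) *
          S3 a.1 b.1 a'.1 b'.1 a'.2 b'.2 =
    ∑' n, co k l (gs μ₁ * gs μ₂) n := by
  rw [co_gg]
  change _ = sg _
  rw [sg_add _ _ (co_fg_mem _ _ _ _) (co_fg_mem _ _ _ _), sg_fg, sg_fg]
  simp only [Finset.sum_add_distrib]
  rw [add_add_add_comm]
  congr 1
  · rw [← Finset.Nat.sum_antidiagonal_swap, ← Finset.sum_add_distrib]
    refine Finset.sum_congr rfl fun a _ => ?_
    rw [← Finset.Nat.sum_antidiagonal_swap, ← Finset.sum_add_distrib]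
    refine Finset.sum_congr rfl fun b _ => ?_
    simp only [Prod.fst_swap, Prod.snd_swap]
    ring
  · rw [triple_rev (fun x y z => ∑ b ∈ antidiagonal l, ∑ b' ∈ antidiagonal b.2,
        (μ₁ ^ x + μ₂ ^ x) * (μ₁ + μ₂) ^ y * (2 : ℝ) ^ b'.1 *
          (μ₁ ^ z + μ₂ ^ z) * S3 x b.1 y b'.1 z b'.2), ← Finset.sum_add_distrib]
    refine Finset.sum_congr rfl fun a _ => ?_
    rw [← Finset.sum_add_distrib]
    have : ∀ a' : ℕ × ℕ, ∑ b ∈ antidiagonal l, ∑ b' ∈ antidiagonal b.2,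
        (μ₁ ^ a'.2 + μ₂ ^ a'.2) * (μ₁ + μ₂) ^ a'.1 * (2 : ℝ) ^ b'.1 *
          (μ₁ ^ a.1 + μ₂ ^ a.1) * S3 a'.2 b.1 a'.1 b'.1 a.1 b'.2 =
        ∑ b ∈ antidiagonal l, ∑ b' ∈ antidiagonal b.2,
        (μ₁ ^ a'.2 + μ₂ ^ a'.2) * (μ₁ + μ₂) ^ a'.1 * (2 : ℝ) ^ b'.1 *
          (μ₁ ^ a.1 + μ₂ ^ a.1) * S3 a'.2 b'.2 a'.1 b'.1 a.1 b.1 := fun a' =>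
      triple_rev (fun x y z => (μ₁ ^ a'.2 + μ₂ ^ a'.2) * (μ₁ + μ₂) ^ a'.1 * (2 : ℝ) ^ y *
          (μ₁ ^ a.1 + μ₂ ^ a.1) * S3 a'.2 x a'.1 y a.1 z) l
    rw [Finset.sum_congr rfl fun a' _ => this a', Finset.sum_comm]
    refine Finset.sum_congr rfl fun b _ => ?_
    rw [← Finset.sum_add_distrib]
    refine Finset.sum_congr rfl fun a' _ => ?_
    rw [← Finset.sum_add_distrib]
    refine Finset.sum_congr rfl fun b' _ => ?_
    ring

lemma lhs_cauchy (μ₁ μ₂ : ℝ) (k l : ℕ) : ∑' n, co k l (gs μ₁ * gs μ₂) n =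
    ∑ a ∈ antidiagonal k, ∑ b ∈ antidiagonal l,
      μ₁ ^ a.1 * μ₂ ^ a.2 * (sg (ff a.1 b.1) * sg (ff a.2 b.2)) := by
  have hs : ∀ a b, Summable fun n => ‖I0 (ff a b) n‖ := fun a b =>
    (summable_I0 _ (ff_mem a b)).norm
  have h1 : ∀ n, co k l (gs μ₁ * gs μ₂) n =
      ∑ a ∈ antidiagonal k, ∑ b ∈ antidiagonal l, μ₁ ^ a.1 * μ₂ ^ a.2 *
        ∑ p ∈ antidiagonal n, I0 (ff a.1 b.1) p.1 * I0 (ff a.2 b.2) p.2 := by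
    intro n
    rw [co_mul, Finset.sum_comm]
    simp_rw [Finset.sum_comm (s := antidiagonal n)]
    rw [Finset.sum_comm]
    refine Finset.sum_congr rfl fun a _ => Finset.sum_congr rfl fun b _ => ?_
    rw [Finset.mul_sum]
    refine Finset.sum_congr rfl fun p _ => ?_
    rw [gs, gs, co_arr, co_arr]
    simp only [Pi.smul_apply, smul_eq_mul]
    ring
  have h2 : ∀ a b : ℕ × ℕ, Summable fun n => μ₁ ^ a.1 * μ₂ ^ a.2 *
        ∑ p ∈ antidiagonal n, I0 (ff a.1 b.1) p.1 * I0 (ff a.2 b.2) p.2 := fun a b =>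
    (summable_norm_sum_mul_antidiagonal_of_summable_norm (hs a.1 b.1) (hs a.2 b.2)).of_norm.mul_left _
  simp_rw [h1]
  rw [Summable.tsum_finsetSum (fun a _ => summable_sum fun b _ => h2 a b)]
  refine Finset.sum_congr rfl fun a _ => ?_
  rw [Summable.tsum_finsetSum (fun b _ => h2 a b)]
  refine Finset.sum_congr rfl fun b _ => ?_
  rw [tsum_mul_left, sg, sg,
    tsum_mul_tsum_eq_tsum_sum_antidiagonal_of_summable_norm (hs a.1 b.1) (hs a.2 b.2)]

/-- zeta values -/
noncomputable def zt (s : ℕ) : ℝ := ∑' n : ℕ, 1 / (n : ℝ) ^ s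

lemma opk_e0 (s : ℕ) (hs : 0 < s) (n : ℕ) : opk s e0 n = 1 / (n:ℝ) ^ s := by
  rw [opk_apply]
  rcases Nat.eq_zero_or_pos n with rfl | hn
  · simp [hs.ne']
  · congr 1
    rw [Finset.sum_eq_single 0] <;> simp [e0]
    · omega

lemma mzv_one (s : ℕ) (hs : 0 < s) : mzv ![s] = zt s := by
  rw [mzv_eq, zt]
  refine tsum_congr fun n => ?_
  rw [← opk_e0 s hs]
  simp [app]

lemma mzv_two (p q : ℕ) (hp : 0 < p) :
    mzv ![p, q] = ∑' n : ℕ, (∑ m ∈ range n, 1 / (m:ℝ) ^ p) * (1 / (n:ℝ) ^ q) := by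
  rw [mzv_eq]
  refine tsum_congr fun n => ?_
  have : app ![p, q] = opk q * opk p := by simp [app]
  rw [this, Module.End.mul_apply, opk_apply]
  simp_rw [opk_e0 p hp]
  ring

lemma stuffle_gen (u v : ℕ → ℝ) (hu : Summable u) (hv : Summable v) (hu0 : ∀ n, 0 ≤ u n)
    (hv0 : ∀ n, 0 ≤ v n) : (∑' n, u n) * (∑' n, v n) =
    ∑' n, (∑ m ∈ range n, u m) * v n + ∑' n, (∑ m ∈ range n, v m) * u n + ∑' n, u n * v n := by
  have s1 : Summable fun n => (∑ m ∈ range n, u m) * v n := by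
    refine Summable.of_nonneg_of_le (fun n => mul_nonneg (Finset.sum_nonneg fun i _ => hu0 i) (hv0 n))
      (fun n => ?_) (hv.mul_left (∑' n, u n))
    exact mul_le_mul_of_nonneg_right (hu.sum_le_tsum _ fun i _ => hu0 i) (hv0 n)
  have s2 : Summable fun n => (∑ m ∈ range n, v m) * u n := by
    refine Summable.of_nonneg_of_le (fun n => mul_nonneg (Finset.sum_nonneg fun i _ => hv0 i) (hu0 n))
      (fun n => ?_) (hu.mul_left (∑' n, v n))
    exact mul_le_mul_of_nonneg_right (hv.sum_le_tsum _ fun i _ => hv0 i) (hu0 n)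
  have s3 : Summable fun n => u n * v n := by
    refine Summable.of_nonneg_of_le (fun n => mul_nonneg (hu0 n) (hv0 n))
      (fun n => ?_) (hv.mul_left (∑' n, u n))
    exact mul_le_mul_of_nonneg_right (hu.le_tsum n fun i _ => hu0 i) (hv0 n)
  have t1 := (hu.hasSum.tendsto_sum_nat).mul (hv.hasSum.tendsto_sum_nat)
  have t2 := ((s1.hasSum.tendsto_sum_nat).add (s2.hasSum.tendsto_sum_nat)).add
    (s3.hasSum.tendsto_sum_nat)
  refine tendsto_nhds_unique t1 (t2.congr fun N => ?_)
  induction N with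
  | zero => simp
  | succ N ih =>
    simp only [Finset.sum_range_succ] at ih ⊢
    linear_combination ih

lemma stuffle (p q : ℕ) (hp : 2 ≤ p) (hq : 2 ≤ q) :
    zt p * zt q = mzv ![p, q] + mzv ![q, p] + zt (p + q) := by
  rw [mzv_two _ _ (by omega), mzv_two _ _ (by omega), zt, zt,
    stuffle_gen _ _ (Real.summable_one_div_nat_pow.2 (by omega))
      (Real.summable_one_div_nat_pow.2 (by omega)) (fun n => by positivity) (fun n => by positivity)]
  congr 1
  rw [zt]
  refine tsum_congr fun n => ?_
  rw [pow_add, div_mul_div_comm, one_mul]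

theorem main_of_sum (hsum : ∀ a b, sg (ff a b) = zt (a + b + 2)) (k ℓ : ℕ) (μ₁ μ₂ : ℝ) :
    (ℓ + 1 : ℝ) * mzv ![k + ℓ + 4] *
        (∑ a ∈ antidiagonal k, μ₁ ^ a.1 * μ₂ ^ a.2) +
      (∑ a ∈ antidiagonal k, ∑ b ∈ antidiagonal ℓ,
        (μ₁ ^ a.1 * μ₂ ^ a.2 + μ₂ ^ a.1 * μ₁ ^ a.2) *
          mzv ![a.2 + b.2 + 2, a.1 + b.1 + 2]) =
    (∑ a ∈ antidiagonal k, ∑ b ∈ antidiagonal ℓ,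
      (μ₁ ^ a.1 * μ₂ ^ a.2 + μ₂ ^ a.1 * μ₁ ^ a.2) * S2 a.1 b.1 a.2 b.2) +
    ∑ a ∈ antidiagonal k, ∑ a' ∈ antidiagonal a.2,
      ∑ b ∈ antidiagonal ℓ, ∑ b' ∈ antidiagonal b.2,
        (μ₁ ^ a.1 + μ₂ ^ a.1) * (μ₁ + μ₂) ^ a'.1 * (2 : ℝ) ^ b'.1 *
          (μ₁ ^ a'.2 + μ₂ ^ a'.2) *
          S3 a.1 b.1 a'.1 b'.1 a'.2 b'.2 := by
  rw [rhs_eq, lhs_cauchy]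
  simp_rw [hsum]
  have h1 : ∀ a ∈ antidiagonal k, ∀ b ∈ antidiagonal ℓ,
      μ₁ ^ a.1 * μ₂ ^ a.2 * (zt (a.1 + b.1 + 2) * zt (a.2 + b.2 + 2)) =
      (μ₁ ^ a.1 * μ₂ ^ a.2 * mzv ![a.1 + b.1 + 2, a.2 + b.2 + 2] +
      μ₁ ^ a.1 * μ₂ ^ a.2 * mzv ![a.2 + b.2 + 2, a.1 + b.1 + 2]) +
      μ₁ ^ a.1 * μ₂ ^ a.2 * mzv ![k + ℓ + 4] := by
    intro a ha b hb
    rw [stuffle _ _ (by omega) (by omega), mzv_one _ (by omega)]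
    rw [HasAntidiagonal.mem_antidiagonal] at ha hb
    rw [show a.1 + b.1 + 2 + (a.2 + b.2 + 2) = k + ℓ + 4 by omega]
    ring
  rw [Finset.sum_congr rfl fun a ha => Finset.sum_congr rfl fun b hb => h1 a ha b hb]
  simp only [Finset.sum_add_distrib, add_mul]
  have h2 : ∑ a ∈ antidiagonal k, ∑ b ∈ antidiagonal ℓ,
      μ₁ ^ a.1 * μ₂ ^ a.2 * mzv ![a.1 + b.1 + 2, a.2 + b.2 + 2] =
      ∑ a ∈ antidiagonal k, ∑ b ∈ antidiagonal ℓ,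
      μ₂ ^ a.1 * μ₁ ^ a.2 * mzv ![a.2 + b.2 + 2, a.1 + b.1 + 2] := by
    rw [← Finset.Nat.sum_antidiagonal_swap]
    refine Finset.sum_congr rfl fun a _ => ?_
    rw [← Finset.Nat.sum_antidiagonal_swap]
    refine Finset.sum_congr rfl fun b _ => ?_
    simp only [Prod.fst_swap, Prod.snd_swap]
    ring
  rw [h2]
  simp only [Finset.sum_const, Finset.Nat.card_antidiagonal, nsmul_eq_mul, ← Finset.mul_sum,
    ← Finset.sum_mul]
  push_cast
  ring

/-- interchange of summation for nonnegative double families -/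
lemma hasSum_swap {α β : Type*} (f : α → β → ℝ) (g : α → ℝ) (h : β → ℝ) (s : ℝ)
    (hf : ∀ a b, 0 ≤ f a b) (hg : ∀ a, HasSum (f a) (g a)) (hh : ∀ b, HasSum (fun a => f a b) (h b))
    (hs : HasSum g s) : HasSum h s := by
  have g0 : ∀ a, 0 ≤ g a := fun a => (hg a).nonneg (hf a)
  have h0 : ∀ b, 0 ≤ h b := fun b => (hh b).nonneg (fun a => hf a b)
  have s0 : 0 ≤ s := hs.nonneg g0
  have e1 : ∀ a, ENNReal.ofReal (g a) = ∑' b, ENNReal.ofReal (f a b) := fun a => by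
    rw [← (hg a).tsum_eq, ENNReal.ofReal_tsum_of_nonneg (hf a) (hg a).summable]
  have e2 : ∀ b, ENNReal.ofReal (h b) = ∑' a, ENNReal.ofReal (f a b) := fun b => by
    rw [← (hh b).tsum_eq, ENNReal.ofReal_tsum_of_nonneg (fun a => hf a b) (hh b).summable]
  have e3 : ENNReal.ofReal s = ∑' b, ENNReal.ofReal (h b) := by
    rw [← hs.tsum_eq, ENNReal.ofReal_tsum_of_nonneg g0 hs.summable]
    simp_rw [e1, e2]
    exact ENNReal.tsum_comm
  have hfin : ∑' b, ENNReal.ofReal (h b) ≠ ⊤ := by rw [← e3]; exact ENNReal.ofReal_ne_top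
  have hsum : Summable h := by
    have := ENNReal.summable_toReal hfin
    simpa [ENNReal.toReal_ofReal, h0] using this
  have : ∑' b, h b = s := by
    rw [← ENNReal.ofReal_tsum_of_nonneg h0 hsum] at e3
    exact ((ENNReal.ofReal_eq_ofReal_iff s0 (tsum_nonneg h0)).1 e3).symm
  rw [← this]; exact hsum.hasSum

lemma uniq_step (d : ℕ → ℝ) (h : ∀ x : ℝ, 0 < x → x ≤ 1/2 → HasSum (fun a => x ^ a * d a) 0) :
    d 0 = 0 ∧ ∀ x : ℝ, 0 < x → x ≤ 1/2 → HasSum (fun a => x ^ a * d (a+1)) 0 := by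
  have key : ∀ x : ℝ, 0 < x → x ≤ 1/2 → HasSum (fun a => x ^ a * d (a+1)) (- d 0 / x) := by
    intro x hx hx2
    have := (hasSum_nat_add_iff' 1).2 (h x hx hx2)
    simp only [Finset.sum_range_one, pow_zero, one_mul, zero_sub] at this
    have := this.mul_left (x⁻¹)
    have e1 : (fun a => x ^ a * d (a+1)) = fun i => x⁻¹ * (x ^ (i + 1) * d (i + 1)) := by
      funext a
      rw [pow_succ]
      field_simp
    have e2 : - d 0 / x = x⁻¹ * -d 0 := by field_simp
    rw [e1, e2]
    exact this
  have h0 : d 0 = 0 := by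
    have hs := (key (1/2) (by norm_num) le_rfl).summable.abs
    set C := ∑' a, |((1:ℝ)/2) ^ a * d (a+1)| with hC
    have hC0 : 0 ≤ C := tsum_nonneg fun _ => abs_nonneg _
    have b : ∀ x : ℝ, 0 < x → x ≤ 1/2 → |d 0| ≤ x * C := by
      intro x hx hx2
      have k := key x hx hx2
      have k1 : |- d 0 / x| ≤ C := by
        have k2 : ‖∑' a, x ^ a * d (a+1)‖ ≤ ∑' a, ‖x ^ a * d (a+1)‖ :=
          norm_tsum_le_tsum_norm k.summable.norm
        rw [k.tsum_eq, Real.norm_eq_abs] at k2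
        refine k2.trans ?_
        refine Summable.tsum_le_tsum (fun a => ?_) k.summable.norm hs
        rw [Real.norm_eq_abs, abs_mul, abs_mul, abs_pow, abs_pow, abs_of_pos hx,
          abs_of_pos (by norm_num : (0:ℝ) < 1/2)]
        gcongr
      rw [abs_div, abs_neg, abs_of_pos hx, div_le_iff₀ hx] at k1
      linarith
    by_contra hne
    have hpos : 0 < |d 0| := abs_pos.2 hne
    have := b (min (1/2) (|d 0| / (2 * (C+1)))) (by positivity) (min_le_left _ _)
    have h2 : min (1/2) (|d 0| / (2 * (C+1))) * C ≤ |d 0| / (2 * (C+1)) * (C+1) := by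
      gcongr
      · exact min_le_right _ _
      · linarith
    have h3 : |d 0| / (2 * (C+1)) * (C+1) = |d 0| / 2 := by field_simp
    linarith
  refine ⟨h0, fun x hx hx2 => ?_⟩
  have := key x hx hx2
  simpa [h0] using this

lemma uniq (d : ℕ → ℝ) (h : ∀ x : ℝ, 0 < x → x ≤ 1/2 → HasSum (fun a => x ^ a * d a) 0) (n : ℕ) :
    d n = 0 := by
  induction n generalizing d with
  | zero => exact (uniq_step d h).1
  | succ n ih => exact ih (fun a => d (a+1)) (uniq_step d h).2

lemma uniq2 (d : ℕ × ℕ → ℝ) (h : ∀ x y : ℝ, 0 < x → x ≤ 1/2 → 0 < y → y ≤ 1/2 →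
    HasSum (fun p : ℕ × ℕ => x ^ p.1 * y ^ p.2 * d p) 0) (a b : ℕ) : d (a, b) = 0 := by
  have s1 : ∀ y : ℝ, 0 < y → y ≤ 1/2 → ∀ a, Summable fun b => y ^ b * d (a, b) := by
    intro y hy hy2 a
    have := (h (1/2) y (by norm_num) le_rfl hy hy2).summable.prod_factor a
    have := this.mul_left (((1:ℝ)/2) ^ a)⁻¹
    refine this.congr fun b => ?_
    field_simp
  have s2 : ∀ y : ℝ, 0 < y → y ≤ 1/2 → ∀ a, ∑' b, y ^ b * d (a, b) = 0 := by
    intro y hy hy2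
    apply uniq
    intro x hx hx2
    refine (h x y hx hx2 hy hy2).prod_fiberwise fun a => ?_
    have := (s1 y hy hy2 a).hasSum.mul_left (x ^ a)
    simpa only [mul_assoc] using this
  refine uniq (fun b => d (a, b)) (fun y hy hy2 => ?_) b
  rw [← s2 y hy hy2 a]
  exact (s1 y hy hy2 a).hasSum

/-- rising factorial with offset -/
noncomputable def Pf (X Y : ℝ) (n : ℕ) : ℝ := ∏ j ∈ range n, ((j:ℝ) + 1 + X - Y)
/-- shifted rising factorial -/
noncomputable def Df (Y : ℝ) (m n : ℕ) : ℝ := ∏ j ∈ range n, ((m:ℝ) + 1 + j - Y)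


lemma Df_pos (Y : ℝ) (hY : Y ≤ 1/2) (m n : ℕ) : 0 < Df Y m n := by
  refine Finset.prod_pos fun j _ => ?_
  have : (0:ℝ) ≤ m := by positivity
  have : (0:ℝ) ≤ j := by positivity
  linarith

lemma Df_succ (Y : ℝ) (m n : ℕ) : Df Y m (n+1) = Df Y m n * ((m:ℝ) + 1 + n - Y) := by
  rw [Df, Finset.prod_range_succ, ← Df]

lemma Df_succ' (Y : ℝ) (m n : ℕ) : Df Y m (n+1) = ((m:ℝ) + 1 - Y) * Df Y (m+1) n := by
  rw [Df, Finset.prod_range_succ', Df, mul_comm]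
  simp only [Nat.cast_zero, add_zero]
  congr 1
  refine Finset.prod_congr rfl fun j _ => ?_
  push_cast; ring

lemma Pf_succ (X Y : ℝ) (n : ℕ) : Pf X Y (n+1) = Pf X Y n * ((n:ℝ) + 1 + X - Y) := by
  rw [Pf, Finset.prod_range_succ, ← Pf]


lemma Pf_pos (X Y : ℝ) (hX0 : 0 < X) (hY : Y ≤ 1/2) (n : ℕ) : 0 < Pf X Y n := by
  refine Finset.prod_pos fun j _ => ?_
  have : (0:ℝ) ≤ j := by positivity
  linarith


lemma ker_partial_n (X Y : ℝ) (hX0 : 0 < X) (hX : X ≤ 1/2) (hY0 : 0 < Y) (hY : Y ≤ 1/2) (m N : ℕ) : ∑ n ∈ range N, Pf X Y n / Df Y m (n+2) =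
    1 / (((m:ℝ)+1-X) * ((m:ℝ)+1-Y)) * (1 - Pf X Y N / Df Y (m+1) N) := by
  have hm : (0:ℝ) ≤ m := by positivity
  have h1 : (m:ℝ)+1-X ≠ 0 := by linarith
  have h2 : (m:ℝ)+1-Y ≠ 0 := by linarith
  induction N with
  | zero => simp [Pf, Df]
  | succ N ih =>
    have hN : (0:ℝ) ≤ N := by positivity
    have h3 := (Df_pos Y hY (m+1) N).ne'
    have h4 : (m:ℝ)+1+1+N-Y ≠ 0 := by linarith
    rw [Finset.sum_range_succ, ih, Df_succ' Y m (N+1), Df_succ Y (m+1) N, Pf_succ]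
    push_cast
    field_simp
    ring

lemma ker_r_sq (X Y : ℝ) (hX0 : 0 < X) (hX : X ≤ 1/2) (hY0 : 0 < Y) (hY : Y ≤ 1/2) (m N : ℕ) : (Pf X Y N / Df Y (m+1) N) ^ 2 ≤ 2 / ((N:ℝ) + 2) := by
  have hm : (0:ℝ) ≤ m := by positivity
  induction N with
  | zero => simp [Pf, Df]
  | succ N ih =>
    have hN : (0:ℝ) ≤ N := by positivity
    have h3 := (Df_pos Y hY (m+1) N)
    have h4 : 0 < (m:ℝ)+1+1+N-Y := by linarith
    rw [Df_succ Y (m+1) N, Pf_succ, mul_div_mul_comm, mul_pow]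
    push_cast
    have h5 : ((N:ℝ)+1+X-Y) / ((m:ℝ)+1+1+N-Y) ≤ (N+3/2)/(N+2) := by
      rw [div_le_div_iff₀ h4 (by linarith)]
      nlinarith
    have h6 : 0 ≤ ((N:ℝ)+1+X-Y) / ((m:ℝ)+1+1+N-Y) := div_nonneg (by linarith) h4.le
    have h7 : (((N:ℝ)+1+X-Y) / ((m:ℝ)+1+1+N-Y))^2 ≤ (N+2)/(N+3) := by
      refine (pow_le_pow_left₀ h6 h5 2).trans ?_
      rw [div_pow, div_le_div_iff₀ (by positivity) (by positivity)]
      nlinarith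
    calc _ ≤ 2 / ((N:ℝ)+2) * ((N+2)/(N+3)) := by gcongr
      _ = _ := by field_simp; ring

lemma ker_sum_n (X Y : ℝ) (hX0 : 0 < X) (hX : X ≤ 1/2) (hY0 : 0 < Y) (hY : Y ≤ 1/2) (m : ℕ) : HasSum (fun n => Pf X Y n / Df Y m (n+2))
    (1 / (((m:ℝ)+1-X) * ((m:ℝ)+1-Y))) := by
  rw [hasSum_iff_tendsto_nat_of_nonneg
    (fun n => div_nonneg (Pf_pos X Y hX0 hY n).le (Df_pos Y hY _ _).le)]
  simp_rw [ker_partial_n X Y hX0 hX hY0 hY]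
  have t : Filter.Tendsto (fun N => Pf X Y N / Df Y (m+1) N) Filter.atTop (nhds 0) := by
    have : Filter.Tendsto (fun N => (Pf X Y N / Df Y (m+1) N) ^ 2) Filter.atTop (nhds 0) := by
      refine squeeze_zero (fun _ => sq_nonneg _) (ker_r_sq X Y hX0 hX hY0 hY m) ?_
      refine Filter.Tendsto.div_atTop tendsto_const_nhds ?_
      exact Filter.tendsto_atTop_add_const_right _ _ tendsto_natCast_atTop_atTop
    have := this.sqrt
    simp only [Real.sqrt_sq_eq_abs, Real.sqrt_zero] at this
    exact (tendsto_zero_iff_abs_tendsto_zero _).2 this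
  have := (t.const_sub 1).const_mul (1 / (((m:ℝ)+1-X) * ((m:ℝ)+1-Y)))
  simpa using this

lemma ker_partial_m (X Y : ℝ) (hX0 : 0 < X) (hX : X ≤ 1/2) (hY0 : 0 < Y) (hY : Y ≤ 1/2) (n M : ℕ) : ∑ m ∈ range M, Pf X Y n / Df Y m (n+2) =
    Pf X Y n / ((n:ℝ)+1) * (1 / Df Y 0 (n+1) - 1 / Df Y M (n+1)) := by
  induction M with
  | zero => simp
  | succ M ih =>
    have hM : (0:ℝ) ≤ M := by positivity
    have hn : (0:ℝ) ≤ n := by positivity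
    have h1 : (M:ℝ)+1-Y ≠ 0 := by linarith
    have h2 := (Df_pos Y hY (M+1) n).ne'
    have h4 : (M:ℝ)+1+1+n-Y ≠ 0 := by linarith
    have h5 := (Df_pos Y hY 0 (n+1)).ne'
    rw [Finset.sum_range_succ, ih, Df_succ' Y M n, Df_succ' Y M (n+1), Df_succ Y (M+1) n]
    push_cast
    field_simp
    ring

lemma Df_ge (Y : ℝ) (hY : Y ≤ 1/2) (n M : ℕ) : (M:ℝ) ≤ Df Y M (n+1) := by
  rw [Df_succ']
  have : 1 ≤ Df Y (M+1) n := by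
    rw [Df]
    refine Finset.prod_induction _ (fun x : ℝ => 1 ≤ x)
      (fun a b ha hb => one_le_mul_of_one_le_of_one_le ha hb) le_rfl ?_
    intro j _
    have : (0:ℝ) ≤ j := by positivity
    have : (0:ℝ) ≤ M := by positivity
    push_cast
    linarith
  have hM : (0:ℝ) ≤ M := by positivity
  nlinarith

lemma ker_sum_m (X Y : ℝ) (hX0 : 0 < X) (hX : X ≤ 1/2) (hY0 : 0 < Y) (hY : Y ≤ 1/2) (n : ℕ) : HasSum (fun m => Pf X Y n / Df Y m (n+2))
    (Pf X Y n / Df Y 0 (n+1) / ((n:ℝ)+1)) := by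
  rw [hasSum_iff_tendsto_nat_of_nonneg
    (fun m => div_nonneg (Pf_pos X Y hX0 hY n).le (Df_pos Y hY _ _).le)]
  simp_rw [ker_partial_m X Y hX0 hX hY0 hY]
  have t : Filter.Tendsto (fun M => 1 / Df Y M (n+1)) Filter.atTop (nhds 0) := by
    refine Filter.Tendsto.div_atTop tendsto_const_nhds ?_
    exact Filter.tendsto_atTop_mono (Df_ge Y hY n) tendsto_natCast_atTop_atTop
  have := (t.const_sub (1 / Df Y 0 (n+1))).const_mul (Pf X Y n / ((n:ℝ)+1))
  convert this using 2
  rw [sub_zero]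
  field_simp

lemma zt_summable (X Y : ℝ) (hX0 : 0 < X) (hX : X ≤ 1/2) (hY0 : 0 < Y) (hY : Y ≤ 1/2) : Summable fun m : ℕ => 1 / (((m:ℝ)+1-X) * ((m:ℝ)+1-Y)) := by
  have h := (summable_nat_add_iff 1).2 (Real.summable_one_div_nat_pow (p := 2) |>.2 (by norm_num))
  refine Summable.of_nonneg_of_le (fun m => ?_) (fun m => ?_) (h.mul_left 4)
  · have hm : (0:ℝ) ≤ m := by positivity
    have : 0 < (m:ℝ)+1-X := by linarith
    have : 0 < (m:ℝ)+1-Y := by linarith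
    positivity
  · have hm : (0:ℝ) ≤ m := by positivity
    have h1 : ((m:ℝ)+1)/2 ≤ (m:ℝ)+1-X := by linarith
    have h2 : ((m:ℝ)+1)/2 ≤ (m:ℝ)+1-Y := by linarith
    have h3 : 0 ≤ (m:ℝ)+1-X := by linarith
    push_cast
    calc 1 / (((m:ℝ)+1-X) * ((m:ℝ)+1-Y)) ≤ 1 / (((m:ℝ)+1)/2 * (((m:ℝ)+1)/2)) := by gcongr
      _ = _ := by field_simp; norm_num

lemma gen_F (X Y : ℝ) (hX0 : 0 < X) (hX : X ≤ 1/2) (hY0 : 0 < Y) (hY : Y ≤ 1/2) : HasSum (fun n : ℕ => Pf X Y n / Df Y 0 (n+1) / ((n:ℝ)+1))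
    (∑' m : ℕ, 1 / (((m:ℝ)+1-X) * ((m:ℝ)+1-Y))) :=
  hasSum_swap (fun m n => Pf X Y n / Df Y m (n+2)) _ _ _
    (fun m n => div_nonneg (Pf_pos X Y hX0 hY n).le (Df_pos Y hY _ _).le)
    (ker_sum_n X Y hX0 hX hY0 hY) (ker_sum_m X Y hX0 hX hY0 hY)
    (zt_summable X Y hX0 hX hY0 hY).hasSum

lemma gen_zt (X Y : ℝ) (hX0 : 0 < X) (hX : X ≤ 1/2) (hY0 : 0 < Y) (hY : Y ≤ 1/2) : HasSum (fun p : ℕ × ℕ => X ^ p.1 * Y ^ p.2 * zt (p.1 + p.2 + 2))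
    (∑' m : ℕ, 1 / (((m:ℝ)+1-X) * ((m:ℝ)+1-Y))) := by
  refine hasSum_swap (fun (m : ℕ) (p : ℕ × ℕ) =>
    X ^ p.1 * Y ^ p.2 * (1 / ((m:ℝ)+1) ^ (p.1 + p.2 + 2))) _ _ _ (fun m p => by positivity)
    (fun m => ?_) (fun p => ?_) (zt_summable X Y hX0 hX hY0 hY).hasSum
  · have hm : (0:ℝ) ≤ m := by positivity
    have g : ∀ x : ℝ, 0 < x → x ≤ 1/2 →
        HasSum (fun a : ℕ => x ^ a / ((m:ℝ)+1) ^ (a+1)) (1 / ((m:ℝ)+1-x)) := by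
      intro x hx hx2
      have h1 : x / ((m:ℝ)+1) < 1 := by rw [div_lt_one (by positivity)]; linarith
      have := (hasSum_geometric_of_lt_one (r := x / ((m:ℝ)+1)) (by positivity) h1).mul_left
        (1 / ((m:ℝ)+1))
      have e : 1 / ((m:ℝ)+1) * (1 - x / ((m:ℝ)+1))⁻¹ = 1 / ((m:ℝ)+1-x) := by
        have : (m:ℝ)+1-x ≠ 0 := by linarith
        field_simp
      rw [e] at this
      refine this.congr_fun ?_
      intro a
      rw [div_pow, pow_succ]
      field_simp
    have gx := g X hX0 hX
    have gy := g Y hY0 hY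
    have := HasSum.mul gx gy (gx.summable.mul_of_nonneg gy.summable
      (fun a => by positivity) (fun a => by positivity))
    rw [div_mul_div_comm, one_mul] at this
    refine this.congr_fun ?_
    intro p
    rw [show p.1 + p.2 + 2 = (p.1 + 1) + (p.2 + 1) by ring, pow_add]
    field_simp
  · refine HasSum.mul_left _ ?_
    have hs := (Real.summable_one_div_nat_pow (p := p.1 + p.2 + 2)).2 (by omega)
    have := (hasSum_nat_add_iff' 1).2 hs.hasSum
    simpa [zt] using this

lemma ff_rec (a b n : ℕ) : (n:ℝ) * ff a b n =
    (if a = 0 ∧ b = 0 then (if n = 0 then 0 else 1) else 0) +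
    (if a = 0 then 0 else ∑ m ∈ range n, ff (a-1) b m) + (if b = 0 then 0 else ff a (b-1) n) := by
  rcases a with _ | a <;> rcases b with _ | b
  · rw [ff_zero_zero, mul_I1]
    rcases n with _ | n
    · simp
    · simp [e0]
  · rw [ff_zero_succ, mul_I0 _ (ff_at_zero _ _)]; simp
  · rw [ff_succ_zero, mul_I1]; simp
  · rw [ff_succ_succ, Pi.add_apply, mul_add, mul_I1, mul_I0 _ (ff_at_zero _ _)]; simp

lemma ff_nonneg (a b n : ℕ) : 0 ≤ ff a b n := by
  induction a generalizing b n with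
  | zero =>
    induction b with
    | zero =>
      rw [ff_zero_zero, I1_apply]
      refine div_nonneg (Finset.sum_nonneg fun m _ => ?_) (by positivity)
      unfold e0; split_ifs <;> norm_num
    | succ b ih => rw [ff_zero_succ, I0_apply]; exact div_nonneg ih (by positivity)
  | succ a iha =>
    induction b with
    | zero =>
      rw [ff_succ_zero, I1_apply]
      exact div_nonneg (Finset.sum_nonneg fun m _ => iha _ _) (by positivity)
    | succ b ih =>
      rw [ff_succ_succ, Pi.add_apply, I1_apply, I0_apply]
      exact add_nonneg (div_nonneg (Finset.sum_nonneg fun m _ => iha _ _) (by positivity))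
        (div_nonneg ih (by positivity))

lemma geom_four (n : ℕ) : ∑ m ∈ range n, (4:ℝ) ^ m ≤ 4 ^ n / 3 := by
  rw [geom_sum_eq (by norm_num)]
  have : (0:ℝ) < 4 ^ n := by positivity
  linarith

lemma ff_bound (a b n : ℕ) : ff a b n ≤ 4 ^ n * (4/3) ^ (a + b) := by
  rcases Nat.eq_zero_or_pos n with rfl | hn
  · rw [ff_at_zero]; positivity
  have key : ∀ (a b n : ℕ), 0 < n → (n:ℝ) * ff a b n ≤ 4 ^ n * (4/3) ^ (a+b) →
      ff a b n ≤ 4 ^ n * (4/3) ^ (a+b) := by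
    intro a b n hn h
    have h1 : (1:ℝ) ≤ n := by exact_mod_cast hn
    nlinarith [ff_nonneg a b n]
  have hsum : ∀ a b n, (∀ m, ff a b m ≤ 4 ^ m * (4/3) ^ (a + b)) →
      ∑ m ∈ range n, ff a b m ≤ 4 ^ n / 3 * (4/3) ^ (a+b) := by
    intro a b n h
    refine (Finset.sum_le_sum fun m _ => h m).trans ?_
    rw [← Finset.sum_mul]
    gcongr
    exact geom_four n
  have main : ∀ N a b, a + b = N → ∀ n, ff a b n ≤ 4 ^ n * (4/3) ^ (a + b) := by
    intro N
    induction N with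
    | zero =>
      intro a b hab n
      obtain ⟨rfl, rfl⟩ : a = 0 ∧ b = 0 := by omega
      rcases Nat.eq_zero_or_pos n with rfl | hn
      · rw [ff_at_zero]; positivity
      apply key _ _ _ hn
      rw [ff_rec]
      simp [hn.ne']
      exact one_le_pow₀ (by norm_num)
    | succ N ih =>
      intro a b hab n
      rcases Nat.eq_zero_or_pos n with rfl | hn
      · rw [ff_at_zero]; positivity
      apply key _ _ _ hn
      rw [ff_rec]
      have t1 : (if a = 0 then 0 else ∑ m ∈ range n, ff (a-1) b m) ≤ 4 ^ n / 3 * (4/3) ^ N := by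
        split_ifs with h
        · positivity
        · have := hsum (a-1) b n (ih (a-1) b (by omega))
          rwa [show a - 1 + b = N by omega] at this
      have t2 : (if b = 0 then 0 else ff a (b-1) n) ≤ 4 ^ n * (4/3) ^ N := by
        split_ifs with h
        · positivity
        · have := ih a (b-1) (by omega) n
          rwa [show a + (b-1) = N by omega] at this
      rw [if_neg (by omega), hab, pow_succ]
      linarith
  exact main _ a b rfl n

lemma shift_fst (h : ℕ × ℕ → ℝ) (s : ℝ) (hs : HasSum h s) :
    HasSum (fun p : ℕ × ℕ => if p.1 = 0 then 0 else h (p.1 - 1, p.2)) s := by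
  have hi : Function.Injective (fun p : ℕ × ℕ => (p.1 + 1, p.2)) := by
    rintro ⟨a, b⟩ ⟨c, d⟩ h; simpa using h
  rw [← hi.hasSum_iff]
  · simpa [Function.comp_def] using hs
  · rintro ⟨a, b⟩ hab
    rcases a with _ | a
    · simp
    · exact absurd ⟨(a, b), rfl⟩ hab

lemma shift_snd (h : ℕ × ℕ → ℝ) (s : ℝ) (hs : HasSum h s) :
    HasSum (fun p : ℕ × ℕ => if p.2 = 0 then 0 else h (p.1, p.2 - 1)) s := by
  have hi : Function.Injective (fun p : ℕ × ℕ => (p.1, p.2 + 1)) := by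
    rintro ⟨a, b⟩ ⟨c, d⟩ h; simpa using h
  rw [← hi.hasSum_iff]
  · simpa [Function.comp_def] using hs
  · rintro ⟨a, b⟩ hab
    rcases b with _ | b
    · simp
    · exact absurd ⟨(a, b), rfl⟩ hab

/-- numerical generating function -/
noncomputable def GG (X Y : ℝ) (n : ℕ) : ℝ := ∑' p : ℕ × ℕ, X ^ p.1 * Y ^ p.2 * ff p.1 p.2 n

lemma GG_hasSum (X Y : ℝ) (hX0 : 0 < X) (hX : X ≤ 1/2) (hY0 : 0 < Y) (hY : Y ≤ 1/2) (n : ℕ) :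
    HasSum (fun p : ℕ × ℕ => X ^ p.1 * Y ^ p.2 * ff p.1 p.2 n) (GG X Y n) := by
  have hg : Summable fun a : ℕ => ((2:ℝ)/3) ^ a :=
    summable_geometric_of_lt_one (by norm_num) (by norm_num)
  have h2 := (hg.mul_of_nonneg hg (fun a => by positivity) (fun a => by positivity)).mul_left
    ((4:ℝ) ^ n)
  refine (Summable.of_nonneg_of_le (fun p => ?_) (fun p => ?_) h2).hasSum
  · have := ff_nonneg p.1 p.2 n
    positivity
  · calc X ^ p.1 * Y ^ p.2 * ff p.1 p.2 n ≤
        (1/2) ^ p.1 * (1/2) ^ p.2 * (4 ^ n * (4/3) ^ (p.1 + p.2)) := by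
          have := ff_nonneg p.1 p.2 n
          gcongr
          exact ff_bound _ _ _
      _ = 4 ^ n * ((1/2 * (4/3)) ^ p.1 * (1/2 * (4/3)) ^ p.2) := by
          rw [pow_add, mul_pow, mul_pow]; ring
      _ = _ := by norm_num

lemma GG_rec (X Y : ℝ) (hX0 : 0 < X) (hX : X ≤ 1/2) (hY0 : 0 < Y) (hY : Y ≤ 1/2) (n : ℕ) :
    (n:ℝ) * GG X Y n = (if n = 0 then 0 else 1) + X * ∑ m ∈ range n, GG X Y m + Y * GG X Y n := by
  have H := GG_hasSum X Y hX0 hX hY0 hY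
  have h1 := (H n).mul_left (n:ℝ)
  have h2 := shift_fst _ _ ((hasSum_sum fun m (_ : m ∈ range n) => H m).mul_left X)
  have h3 := shift_snd _ _ ((H n).mul_left Y)
  have h4 : HasSum (fun p : ℕ × ℕ => if p.1 = 0 ∧ p.2 = 0 then (if n = 0 then (0:ℝ) else 1) else 0)
      (if n = 0 then 0 else 1) := by
    have := hasSum_ite_eq ((0, 0) : ℕ × ℕ) (if n = 0 then (0:ℝ) else 1)
    simpa [Prod.ext_iff] using this
  refine h1.unique (((h4.add h2).add h3).congr_fun ?_)
  rintro ⟨a, b⟩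
  dsimp only
  rw [mul_left_comm, ff_rec]
  rcases a with _ | a <;> rcases b with _ | b
  · simp
  · simp [pow_succ]; ring
  · simp [pow_succ, ← Finset.mul_sum]; ring
  · simp [pow_succ, ← Finset.mul_sum]; ring

lemma GG_eq (X Y : ℝ) (hX0 : 0 < X) (hX : X ≤ 1/2) (hY0 : 0 < Y) (hY : Y ≤ 1/2) (n : ℕ) :
    GG X Y (n+1) = Pf X Y n / Df Y 0 (n+1) := by
  have R := GG_rec X Y hX0 hX hY0 hY
  have g0 : GG X Y 0 = 0 := by simp [GG, ff_at_zero]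
  induction n with
  | zero =>
    have := R 1
    simp [g0] at this
    simp [Pf, Df]
    refine eq_inv_of_mul_eq_one_left ?_
    linarith
  | succ n ih =>
    have r1 := R (n+1)
    have r2 := R (n+2)
    rw [Finset.sum_range_succ] at r2
    simp only [Nat.add_eq_zero_iff, OfNat.ofNat_ne_zero, one_ne_zero, and_false, if_false] at r1 r2
    have hn : (0:ℝ) ≤ n := by positivity
    have hne : (n:ℝ) + 2 - Y ≠ 0 := by linarith
    have hD := (Df_pos Y hY 0 (n+1)).ne'
    push_cast at r1 r2
    have r3 : ((n:ℝ) + 2 - Y) * GG X Y (n+2) = ((n:ℝ) + 1 + X - Y) * GG X Y (n+1) := by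
      linear_combination r2 - r1
    rw [ih] at r3
    rw [Df_succ, Pf_succ, eq_div_iff (mul_ne_zero hD (by push_cast; linarith))]
    push_cast
    field_simp at r3
    linear_combination r3

lemma gen_ff (X Y : ℝ) (hX0 : 0 < X) (hX : X ≤ 1/2) (hY0 : 0 < Y) (hY : Y ≤ 1/2) :
    HasSum (fun p : ℕ × ℕ => X ^ p.1 * Y ^ p.2 * sg (ff p.1 p.2))
    (∑' m : ℕ, 1 / (((m:ℝ)+1-X) * ((m:ℝ)+1-Y))) := by
  refine hasSum_swap (fun (n : ℕ) (p : ℕ × ℕ) =>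
    X ^ p.1 * Y ^ p.2 * ff p.1 p.2 (n+1) / ((n:ℝ)+1)) _ _ _ (fun n p => ?_)
    (fun n => ?_) (fun p => ?_) (gen_F X Y hX0 hX hY0 hY)
  · have := ff_nonneg p.1 p.2 (n+1)
    positivity
  · rw [← GG_eq X Y hX0 hX hY0 hY]
    exact (GG_hasSum X Y hX0 hX hY0 hY (n+1)).div_const _
  · simp only [mul_div_assoc]
    refine HasSum.mul_left _ ?_
    have hs := summable_I0 _ (ff_mem p.1 p.2)
    have := (hasSum_nat_add_iff' 1).2 hs.hasSum
    simpa [sg, I0_apply] using this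

theorem sum_formula (a b : ℕ) : sg (ff a b) = zt (a + b + 2) := by
  have := uniq2 (fun p => sg (ff p.1 p.2) - zt (p.1 + p.2 + 2)) (fun x y hx hx2 hy hy2 => ?_) a b
  · simpa [sub_eq_zero] using this
  · have := (gen_ff x y hx hx2 hy hy2).sub (gen_zt x y hx hx2 hy hy2)
    simpa [mul_sub] using this

theorem theorem1_xi_eq_one (k ℓ : ℕ) (μ₁ μ₂ : ℝ) :
    (ℓ + 1 : ℝ) * mzv ![k + ℓ + 4] *
        (∑ a ∈ antidiagonal k, μ₁ ^ a.1 * μ₂ ^ a.2) +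
      (∑ a ∈ antidiagonal k, ∑ b ∈ antidiagonal ℓ,
        (μ₁ ^ a.1 * μ₂ ^ a.2 + μ₂ ^ a.1 * μ₁ ^ a.2) *
          mzv ![a.2 + b.2 + 2, a.1 + b.1 + 2]) =
    (∑ a ∈ antidiagonal k, ∑ b ∈ antidiagonal ℓ,
      (μ₁ ^ a.1 * μ₂ ^ a.2 + μ₂ ^ a.1 * μ₁ ^ a.2) * S2 a.1 b.1 a.2 b.2) +
    ∑ a ∈ antidiagonal k, ∑ a' ∈ antidiagonal a.2,
      ∑ b ∈ antidiagonal ℓ, ∑ b' ∈ antidiagonal b.2,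
        (μ₁ ^ a.1 + μ₂ ^ a.1) * (μ₁ + μ₂) ^ a'.1 * (2 : ℝ) ^ b'.1 *
          (μ₁ ^ a'.2 + μ₂ ^ a'.2) *
          S3 a.1 b.1 a'.1 b'.1 a'.2 b'.2 :=
  main_of_sum sum_formula k ℓ μ₁ μ₂
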